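/- arXiv:2006.10418 — 3 statements merged into one kernel-verified Lean document; each statement's English description precedes it below -/
import Mathlib

section
/- Let K/F be cyclic Galois of degree n with Gal(K/F)=⟨σ⟩, R = K[t;σ], and f ∈ R monic of degree m with gcrd(f,t)=1 and deg_x ĥ = m for its minimal central left multiple ĥ. If N(f) = ĥ₁⋯ĥ_l in F[x] with each ĥ_i irreducible, then f admits a factorization f = f₁⋯f_l into irreducible f_i ∈ R with N(f_i) = ĥ_i (up to a unit scalar) and deg_t f_i = deg_x ĥ_i for every i. -/
/-!
With `x = t ^ n`, the ring `R = K[t;σ]` is free over `K[x]` on `1, t, …, t ^ (n - 1)`, and `N(g)` is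
the determinant of right multiplication by `g`. It is multiplicative, and conjugation by `t` shows
that its coefficients are fixed by `σ`, so it lies in `F[x]`; by the adjugate identity it is a left
multiple of `g`, and `deg N(g) = deg g`. The hypothesis `deg ĥ = deg f` thus says that `N(f)`
generates the ideal of those `p ∈ F[x]` that are left multiples of `f`.

Suppose `f` has this property and `N(f) = p q`. Let `d` generate the left ideal `R q + R f` and
write `f = g d`. If `r` is a left multiple of `g`, then `r q` is one of `f`, so `p ∣ r`; if `r` is a
left multiple of `d`, then `p r` is one of `f`, so `q ∣ r`. In particular `p ∣ N(g)` and `q ∣ N(d)`,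
and since `N(g) N(d) = p q` these are equalities up to units. Hence `d` inherits the property of
`f`, and one splits off the irreducible factors one at a time. An element of irreducible norm is
irreducible, because an element of unit norm is a unit.
-/

/-- A presentation of the ring `R` as the skew polynomial ring `K[t;σ]`: every element of `R` is
a unique left `K`-combination of powers of `t`, and `t a = σ(a) t`. The embedding of the
coefficient ring `K` is called `ι`. -/
structure SkewPolynomialRing {K : Type*} [Ring K] (σ : K →+* K) (R : Type*) [Ring R] where
  ι : K →+* R
  t : R
  t_mul_ι : ∀ a : K, t * ι a = ι (σ a) * t
  coeff : R →+ (ℕ →₀ K)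
  coeff_ι_mul_t_pow : ∀ (a : K) (i : ℕ), coeff (ι a * t ^ i) = Finsupp.single i a
  sum_coeff : ∀ g : R, ((coeff g).sum fun i a => ι a * t ^ i) = g

namespace SkewPolynomialRing

section Ring

variable {K R : Type*} [Ring K] {σ : K →+* K} [Ring R] (S : SkewPolynomialRing σ R)

theorem coeff_injective : Function.Injective S.coeff := fun g h hgh => by
  rw [← S.sum_coeff g, ← S.sum_coeff h, hgh]

theorem t_pow_mul_ι (i : ℕ) (a : K) : S.t ^ i * S.ι a = S.ι (σ^[i] a) * S.t ^ i := by
  induction i with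
  | zero => simp
  | succ i ih =>
    rw [pow_succ', mul_assoc, ih, ← mul_assoc, S.t_mul_ι, mul_assoc, Function.iterate_succ_apply']

theorem coeff_mul (g h : R) (k : ℕ) : S.coeff (g * h) k =
    ∑ i ∈ (S.coeff g).support, ∑ j ∈ (S.coeff h).support,
      if i + j = k then S.coeff g i * σ^[i] (S.coeff h j) else 0 := by
  have hgh : g * h = ∑ i ∈ (S.coeff g).support, ∑ j ∈ (S.coeff h).support,
      S.ι (S.coeff g i * σ^[i] (S.coeff h j)) * S.t ^ (i + j) := by
    conv_lhs => rw [← S.sum_coeff g, ← S.sum_coeff h]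
    rw [Finsupp.sum, Finsupp.sum, Finset.sum_mul_sum]
    refine Finset.sum_congr rfl fun i _ => Finset.sum_congr rfl fun j _ => ?_
    rw [mul_assoc, ← mul_assoc (S.t ^ i), S.t_pow_mul_ι, map_mul, pow_add]
    simp only [mul_assoc]
  rw [hgh]
  simp only [map_sum, S.coeff_ι_mul_t_pow, Finsupp.finsetSum_apply, Finsupp.single_apply]

theorem exists_t_mul_eq_mul_t (g : R) : ∃ g', S.t * g = g' * S.t := by
  refine ⟨(S.coeff g).sum fun i a => S.ι (σ a) * S.t ^ i, ?_⟩
  conv_lhs => rw [← S.sum_coeff g]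
  rw [Finsupp.mul_sum, Finsupp.sum_mul]
  refine Finsupp.sum_congr fun i _ => ?_
  rw [← mul_assoc, S.t_mul_ι, mul_assoc, mul_assoc, ← pow_succ, ← pow_succ']

/-- The degree in `t`, with `natDegree 0 = 0`. -/
noncomputable def natDegree (g : R) : ℕ := (S.coeff g).support.sup id

theorem natDegree_le_iff {g : R} {r : ℕ} :
    S.natDegree g ≤ r ↔ ∀ k, r < k → S.coeff g k = 0 := by
  simp only [natDegree, Finset.sup_le_iff, Finsupp.mem_support_iff, id]
  exact forall_congr' fun k => by rw [← not_lt, not_imp_not]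

theorem coeff_eq_zero_of_natDegree_lt {g : R} {k : ℕ} (hk : S.natDegree g < k) :
    S.coeff g k = 0 :=
  S.natDegree_le_iff.1 le_rfl k hk

theorem le_natDegree_of_coeff_ne_zero {g : R} {k : ℕ} (hk : S.coeff g k ≠ 0) :
    k ≤ S.natDegree g :=
  not_lt.1 (mt S.coeff_eq_zero_of_natDegree_lt hk)

theorem natDegree_eq_of_coeff_ne_zero {g : R} {r : ℕ} (hr : S.coeff g r ≠ 0)
    (hgt : ∀ k, r < k → S.coeff g k = 0) : S.natDegree g = r :=
  le_antisymm (S.natDegree_le_iff.2 hgt) (S.le_natDegree_of_coeff_ne_zero hr)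

theorem coeff_natDegree_ne_zero {g : R} (hg : g ≠ 0) : S.coeff g (S.natDegree g) ≠ 0 := by
  have hsupp : (S.coeff g).support.Nonempty :=
    Finsupp.support_nonempty_iff.2 ((map_ne_zero_iff _ S.coeff_injective).2 hg)
  obtain ⟨i, hi, hdeg⟩ := Finset.exists_mem_eq_sup _ hsupp id
  rw [natDegree, hdeg]
  exact Finsupp.mem_support_iff.1 hi

theorem coeff_mul_natDegree_add_natDegree (g h : R) :
    S.coeff (g * h) (S.natDegree g + S.natDegree h) =
      S.coeff g (S.natDegree g) * σ^[S.natDegree g] (S.coeff h (S.natDegree h)) := by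
  have hle {x : R} {i : ℕ} (hi : i ∈ (S.coeff x).support) : i ≤ S.natDegree x :=
    Finset.le_sup (f := id) hi
  rw [coeff_mul, Finset.sum_eq_single (S.natDegree g), Finset.sum_eq_single (S.natDegree h)]
  · simp
  · exact fun j _ hj => if_neg (by omega)
  · intro hh
    simp [Finsupp.notMem_support_iff.1 hh]
  · intro i hi hne
    refine Finset.sum_eq_zero fun j hj => if_neg ?_
    have := hle hi
    have := hle hj
    omega
  · intro hg
    simp [Finsupp.notMem_support_iff.1 hg]

theorem natDegree_mul_le (g h : R) : S.natDegree (g * h) ≤ S.natDegree g + S.natDegree h := by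
  refine S.natDegree_le_iff.2 fun k hk => ?_
  rw [coeff_mul]
  refine Finset.sum_eq_zero fun i hi => Finset.sum_eq_zero fun j hj => if_neg ?_
  have := S.le_natDegree_of_coeff_ne_zero (Finsupp.mem_support_iff.1 hi)
  have := S.le_natDegree_of_coeff_ne_zero (Finsupp.mem_support_iff.1 hj)
  omega

theorem natDegree_ι_mul_t_pow {a : K} (ha : a ≠ 0) (i : ℕ) : S.natDegree (S.ι a * S.t ^ i) = i :=
  S.natDegree_eq_of_coeff_ne_zero (by simpa [S.coeff_ι_mul_t_pow])
    fun k hk => by simp [S.coeff_ι_mul_t_pow, hk.ne']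

theorem natDegree_t_pow [Nontrivial K] (i : ℕ) : S.natDegree (S.t ^ i) = i := by
  simpa using S.natDegree_ι_mul_t_pow one_ne_zero i

theorem t_ne_zero [Nontrivial K] : S.t ≠ 0 := fun ht => by
  simpa [ht, natDegree] using S.natDegree_t_pow 1

theorem eq_ι_of_natDegree_eq_zero {g : R} (hg : S.natDegree g = 0) : g = S.ι (S.coeff g 0) := by
  refine S.coeff_injective (Finsupp.ext fun k => ?_)
  have hcoeff := S.coeff_ι_mul_t_pow (S.coeff g 0) 0
  rw [pow_zero, mul_one] at hcoeff
  rcases Nat.eq_zero_or_pos k with rfl | hk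
  · simp [hcoeff]
  · simp [hcoeff, hk.ne, S.coeff_eq_zero_of_natDegree_lt (hg ▸ hk)]

end Ring

section DivisionRing

variable {K R : Type*} [DivisionRing K] {σ : K →+* K} [Ring R] (S : SkewPolynomialRing σ R)

theorem coeff_mul_natDegree_add_natDegree_ne_zero {g h : R} (hg : g ≠ 0) (hh : h ≠ 0) :
    S.coeff (g * h) (S.natDegree g + S.natDegree h) ≠ 0 := by
  rw [coeff_mul_natDegree_add_natDegree, ← RingHom.coe_pow]
  exact mul_ne_zero (S.coeff_natDegree_ne_zero hg)
    ((map_ne_zero _).2 (S.coeff_natDegree_ne_zero hh))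

include S in
theorem noZeroDivisors : NoZeroDivisors R where
  eq_zero_or_eq_zero_of_mul_eq_zero {g h} hgh := by
    by_contra! hne
    exact S.coeff_mul_natDegree_add_natDegree_ne_zero hne.1 hne.2 (by simp [hgh])

theorem natDegree_mul {g h : R} (hg : g ≠ 0) (hh : h ≠ 0) :
    S.natDegree (g * h) = S.natDegree g + S.natDegree h :=
  le_antisymm (S.natDegree_mul_le g h)
    (S.le_natDegree_of_coeff_ne_zero (S.coeff_mul_natDegree_add_natDegree_ne_zero hg hh))

theorem exists_natDegree_sub_mul_lt {d y : R} (hd : d ≠ 0) (hy : y ≠ 0)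
    (hle : S.natDegree d ≤ S.natDegree y) :
    ∃ s, y - s * d = 0 ∨ S.natDegree (y - s * d) < S.natDegree y := by
  obtain ⟨k, hk⟩ := Nat.exists_eq_add_of_le' hle
  have hlead : σ^[k] (S.coeff d (S.natDegree d)) ≠ 0 := by
    rw [← RingHom.coe_pow]
    exact (map_ne_zero _).2 (S.coeff_natDegree_ne_zero hd)
  set a := S.coeff y (S.natDegree y) / σ^[k] (S.coeff d (S.natDegree d)) with ha
  have hs : S.natDegree (S.ι a * S.t ^ k) = k :=
    S.natDegree_ι_mul_t_pow (div_ne_zero (S.coeff_natDegree_ne_zero hy) hlead) k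
  have hcoeff :
      S.coeff (S.ι a * S.t ^ k * d) (S.natDegree y) = S.coeff y (S.natDegree y) := by
    have := S.coeff_mul_natDegree_add_natDegree (S.ι a * S.t ^ k) d
    rwa [hs, ← hk, S.coeff_ι_mul_t_pow, Finsupp.single_eq_same, ha, div_mul_cancel₀ _ hlead] at this
  have hdeg : S.natDegree (y - S.ι a * S.t ^ k * d) ≤ S.natDegree y :=
    S.natDegree_le_iff.2 fun j hj => by
      have hj' := (S.natDegree_mul_le (S.ι a * S.t ^ k) d).trans_lt (by rwa [hs, ← hk])
      rw [map_sub, Finsupp.sub_apply, S.coeff_eq_zero_of_natDegree_lt hj,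
        S.coeff_eq_zero_of_natDegree_lt hj', sub_zero]
  refine ⟨S.ι a * S.t ^ k, or_iff_not_imp_left.2 fun hne => hdeg.lt_of_ne fun heq => ?_⟩
  exact S.coeff_natDegree_ne_zero hne (by rw [heq, map_sub, Finsupp.sub_apply, hcoeff, sub_self])

theorem mem_span_singleton_of_minimal {J : Ideal R} {d : R} (hd : d ≠ 0) (hdJ : d ∈ J)
    (hmin : ∀ y ∈ J, y ≠ 0 → S.natDegree d ≤ S.natDegree y) {y : R} (hy : y ∈ J) :
    y ∈ Ideal.span {d} := by
  induction hr : S.natDegree y using Nat.strong_induction_on generalizing y with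
  | _ r ih =>
    rcases eq_or_ne y 0 with rfl | hy0
    · exact zero_mem _
    obtain ⟨s, hs⟩ := S.exists_natDegree_sub_mul_lt hd hy0 (hmin y hy hy0)
    have hsd : s * d ∈ Ideal.span {d} := Ideal.mul_mem_left _ s (Ideal.mem_span_singleton_self d)
    rw [← (Ideal.span {d}).sub_mem_iff_left hsd]
    rcases hs with hs | hs
    · exact hs ▸ zero_mem _
    · exact ih _ (hr ▸ hs) (J.sub_mem hy (J.mul_mem_left s hdJ)) rfl

include S in
theorem isPrincipalIdealRing : IsPrincipalIdealRing R where
  principal J := by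
    rcases eq_or_ne J ⊥ with rfl | hJ
    · exact bot_isPrincipal
    obtain ⟨d, ⟨hdJ, hd⟩, hmin⟩ := WellFounded.has_min (measure S.natDegree).wf
      {y | y ∈ J ∧ y ≠ 0} (Submodule.exists_mem_ne_zero_of_ne_bot hJ)
    have hmin' (y : R) (hy : y ∈ J) (hy0 : y ≠ 0) : S.natDegree d ≤ S.natDegree y :=
      not_lt.1 (hmin y ⟨hy, hy0⟩)
    exact ⟨d, le_antisymm (fun y => S.mem_span_singleton_of_minimal hd hdJ hmin')
      ((Ideal.span_singleton_le_iff_mem J).2 hdJ)⟩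

end DivisionRing

end SkewPolynomialRing

open Polynomial

theorem associated_of_dvd_of_associated_mul {M : Type*} [CommMonoidWithZero M] [IsCancelMulZero M]
    {a b p q : M} (hp : p ≠ 0) (hq : q ≠ 0) (hpa : p ∣ a) (hqb : q ∣ b)
    (hab : Associated (a * b) (p * q)) : Associated a p ∧ Associated b q := by
  obtain ⟨c, rfl⟩ := hpa
  obtain ⟨d, rfl⟩ := hqb
  have hcd : IsUnit (c * d) := by
    have hdvd : p * q * (c * d) ∣ p * q * 1 := by
      rw [← mul_mul_mul_comm, mul_one]
      exact hab.dvd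
    exact isUnit_of_dvd_one ((mul_dvd_mul_iff_left (mul_ne_zero hp hq)).1 hdvd)
  exact ⟨associated_mul_unit_left p c (isUnit_of_mul_isUnit_left hcd),
    associated_mul_unit_left q d (isUnit_of_mul_isUnit_right hcd)⟩

theorem exists_eq_C_mul_of_associated {A : Type*} [CommRing A] [IsDomain A] {p q : A[X]}
    (hpq : Associated p q) : ∃ c : A, IsUnit c ∧ p = C c * q := by
  obtain ⟨u, hu⟩ := hpq.symm
  obtain ⟨c, hc, hcu⟩ := isUnit_iff.1 u.isUnit
  exact ⟨c, hc, by rw [hcu, mul_comm, hu]⟩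

theorem natDegree_det_le_of_weight {ι A : Type*} [Fintype ι] [DecidableEq ι] [CommRing A]
    (M : Matrix ι ι A[X]) (w : ι → ℕ) {c d : ℕ}
    (hM : ∀ i j, M i j ≠ 0 → c * (M i j).natDegree + w j ≤ w i + d) :
    c * M.det.natDegree ≤ Fintype.card ι * d := by
  have hterm (π : Equiv.Perm ι) :
      c * (Equiv.Perm.sign π • ∏ i, M (π i) i).natDegree ≤ Fintype.card ι * d := by
    by_cases hzero : ∃ i, M (π i) i = 0
    · obtain ⟨i, hi⟩ := hzero
      simp [Finset.prod_eq_zero (f := fun i => M (π i) i) (Finset.mem_univ i) hi]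
    · push Not at hzero
      have hsum := Finset.sum_le_sum fun i (_ : i ∈ Finset.univ) => hM (π i) i (hzero i)
      rw [Finset.sum_add_distrib, Finset.sum_add_distrib, ← Finset.mul_sum, Equiv.sum_comp π w,
        Finset.sum_const, Finset.card_univ, smul_eq_mul] at hsum
      have hprod : (Equiv.Perm.sign π • ∏ i, M (π i) i).natDegree ≤ ∑ i, (M (π i) i).natDegree :=
        (natDegree_smul_le _ _).trans (natDegree_prod_le _ _)
      have := Nat.mul_le_mul_left c hprod
      omega
  rw [Matrix.det_apply]
  exact Finset.sum_induction _ (fun p : A[X] => c * p.natDegree ≤ Fintype.card ι * d)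
    (fun p q hp hq => (Nat.mul_le_mul_left c (natDegree_add_le p q)).trans <| by
      rcases max_choice p.natDegree q.natDegree with h | h <;> simpa [h]) (by simp)
    fun π _ => hterm π

/-- A presentation of `R` as `K[t;σ]` with `σ ^ n = 1` and `F` the fixed field of `σ`, so that
`x = t ^ n` commutes with `K` and `F[x]` is central in `R`. -/
structure CyclicSkewPolynomialRing {F K : Type*} [Field F] [Field K] [Algebra F K]
    (σ : K ≃ₐ[F] K) (n : ℕ) (R : Type*) [Ring R] extends
    SkewPolynomialRing (σ : K →+* K) R where
  pow_eq_one : σ ^ n = 1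
  mem_range_algebraMap : ∀ a : K, σ a = a → a ∈ Set.range (algebraMap F K)

namespace CyclicSkewPolynomialRing

variable {F K R : Type*} [Field F] [Field K] [Algebra F K] {σ : K ≃ₐ[F] K} {n : ℕ} [Ring R]
  (S : CyclicSkewPolynomialRing σ n R)

theorem commute_ι_t_pow (a : K) : Commute (S.ι a) (S.t ^ n) := by
  have hσ : (σ : K →+* K)^[n] a = a := by
    simpa [S.pow_eq_one] using (congrFun (AlgEquiv.coe_pow σ n) a).symm
  exact (S.t_pow_mul_ι n a).trans (by rw [hσ]) |>.symm

/-- The map `p ↦ p(t ^ n)`, by which `R` is a left module over `K[x]`. -/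
noncomputable def evalX : K[X] →+* R := eval₂RingHom' S.ι (S.t ^ n) S.commute_ι_t_pow

theorem evalX_eq_sum (p : K[X]) : S.evalX p = p.sum fun k a => S.ι a * S.t ^ (n * k) := by
  simp only [evalX, eval₂RingHom', RingHom.coe_mk, MonoidHom.coe_mk, OneHom.coe_mk, eval₂_eq_sum,
    pow_mul]

@[simp]
theorem evalX_C (a : K) : S.evalX (C a) = S.ι a := by simp [evalX, eval₂RingHom']

@[simp]
theorem evalX_X : S.evalX X = S.t ^ n := by simp [evalX, eval₂RingHom']

theorem t_mul_evalX (p : K[X]) :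
    S.t * S.evalX p = S.evalX (p.map (σ : K →+* K)) * S.t := by
  induction p using Polynomial.induction_on' with
  | add p q hp hq => simp only [map_add, Polynomial.map_add, mul_add, add_mul, hp, hq]
  | monomial k a =>
    simp only [← C_mul_X_pow_eq_monomial, map_mul, map_pow, evalX_C, evalX_X, Polynomial.map_mul,
      map_C, Polynomial.map_pow, map_X]
    rw [← mul_assoc, S.t_mul_ι, mul_assoc, mul_assoc, ← pow_mul, ← pow_succ, ← pow_succ']

/-- The map `p ↦ p(t ^ n)` from `F[x]` into the center of `R`. -/
noncomputable def evalCentral : F[X] →+* R := S.evalX.comp (mapRingHom (algebraMap F K))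

theorem evalCentral_apply (p : F[X]) : S.evalCentral p = S.evalX (p.map (algebraMap F K)) := rfl

theorem evalCentral_eq_sum (p : F[X]) :
    S.evalCentral p = p.sum fun k a => S.ι (algebraMap F K a) * S.t ^ (n * k) := by
  rw [evalCentral_apply, evalX_eq_sum, Polynomial.sum, Polynomial.sum,
    support_map_of_injective _ (algebraMap F K).injective]
  simp only [coeff_map]

theorem evalCentral_mem_center (p : F[X]) : S.evalCentral p ∈ Subring.center R := by
  have ht : Commute S.t (S.evalCentral p) := by
    refine (S.t_mul_evalX (p.map (algebraMap F K))).trans ?_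
    rw [evalCentral_apply, Polynomial.map_map]
    congr 3
    ext a
    simp
  have hι (a : K) : Commute (S.ι a) (S.evalCentral p) := by
    rw [← evalX_C]
    exact (Commute.all _ _).map S.evalX
  refine Subring.mem_center_iff.2 fun g => ?_
  rw [← S.sum_coeff g]
  exact Commute.sum_left _ _ _ fun i _ => (hι _).mul_left (ht.pow_left i)

theorem commute_evalCentral (g : R) (p : F[X]) : Commute g (S.evalCentral p) :=
  Subring.mem_center_iff.1 (S.evalCentral_mem_center p) g

section Coordinates

/-- The element `∑ j, v j * t ^ j` of `R` with coordinates `v j ∈ K[x]`, where `x = t ^ n`. -/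
noncomputable def ofCoords : (Fin n → K[X]) →+ R where
  toFun v := ∑ j, S.evalX (v j) * S.t ^ (j : ℕ)
  map_zero' := by simp
  map_add' v w := by simp [add_mul, Finset.sum_add_distrib]

theorem ofCoords_apply (v : Fin n → K[X]) :
    S.ofCoords v = ∑ j, S.evalX (v j) * S.t ^ (j : ℕ) := rfl

theorem ofCoords_single (j : Fin n) (p : K[X]) :
    S.ofCoords (Pi.single j p) = S.evalX p * S.t ^ (j : ℕ) := by
  rw [ofCoords_apply, Finset.sum_eq_single j]
  · simp
  · intro i _ hij
    simp [hij]
  · simp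

theorem t_mul_ofCoords (v : Fin n → K[X]) :
    S.t * S.ofCoords v = S.ofCoords (fun j => (v j).map (σ : K →+* K)) * S.t := by
  simp only [ofCoords_apply, Finset.mul_sum, Finset.sum_mul, mul_assoc, ← pow_succ]
  simp only [← mul_assoc, t_mul_evalX, pow_succ']

variable [NeZero n]

theorem coeff_ofCoords (v : Fin n → K[X]) (k : ℕ) (j : Fin n) :
    S.coeff (S.ofCoords v) (k * n + j) = (v j).coeff k := by
  have hindex (r : ℕ) (i : Fin n) : r * n + i = k * n + j ↔ r = k ∧ i = j := by
    simpa using (Nat.divModEquiv n).symm.apply_eq_iff_eq (x := (r, i)) (y := (k, j))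
  simp only [ofCoords_apply, evalX_eq_sum, Polynomial.sum, Finset.sum_mul, mul_assoc, ← pow_add,
    map_sum, S.coeff_ι_mul_t_pow, Finsupp.finsetSum_apply, Finsupp.single_apply, mul_comm n,
    hindex]
  rw [Finset.sum_eq_single j]
  · simp +contextual [eq_comm]
  · intro i _ hij
    simp [hij]
  · simp

theorem ofCoords_injective : Function.Injective S.ofCoords := fun v w hvw => by
  ext j k
  rw [← S.coeff_ofCoords v, ← S.coeff_ofCoords w, hvw]

theorem ofCoords_surjective : Function.Surjective S.ofCoords := fun g => by
  rw [← AddMonoidHom.mem_mrange, ← S.sum_coeff g]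
  refine sum_mem fun k _ => ⟨Pi.single (Fin.ofNat n k) (monomial (k / n) (S.coeff g k)), ?_⟩
  rw [ofCoords_single, ← C_mul_X_pow_eq_monomial, map_mul, map_pow, evalX_C, evalX_X, mul_assoc,
    ← pow_mul, ← pow_add, Fin.val_ofNat, Nat.div_add_mod]

theorem evalX_injective : Function.Injective S.evalX := fun p q hpq =>
  Pi.single_injective (0 : Fin n) <| S.ofCoords_injective <| by
    rw [ofCoords_single, ofCoords_single, hpq]

theorem natDegree_evalX (p : K[X]) : S.natDegree (S.evalX p) = n * p.natDegree := by
  have hcoeff (k : ℕ) (j : Fin n) :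
      S.coeff (S.evalX p) (k * n + j) = ((Pi.single 0 p : Fin n → K[X]) j).coeff k := by
    simpa [ofCoords_single] using S.coeff_ofCoords (Pi.single 0 p) k j
  rcases eq_or_ne p 0 with rfl | hp
  · simp [SkewPolynomialRing.natDegree]
  refine S.natDegree_eq_of_coeff_ne_zero ?_ fun k hk => ?_
  · simpa [mul_comm n] using (hcoeff p.natDegree 0).trans_ne (by simpa)
  · have hdiv := hcoeff (k / n) (Fin.ofNat n k)
    rw [Fin.val_ofNat, Nat.div_add_mod'] at hdiv
    rw [hdiv]
    rcases eq_or_ne (Fin.ofNat n k) 0 with h0 | h0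
    · rw [h0, Pi.single_eq_same]
      refine coeff_eq_zero_of_natDegree_lt (Nat.lt_of_mul_lt_mul_left (a := n) ?_)
      rwa [Nat.mul_div_cancel' (by simpa [Fin.ext_iff, Nat.dvd_iff_mod_eq_zero] using h0)]
    · rw [Pi.single_eq_of_ne h0, Polynomial.coeff_zero]

theorem evalCentral_injective : Function.Injective S.evalCentral :=
  S.evalX_injective.comp (Polynomial.map_injective _ (algebraMap F K).injective)

theorem natDegree_evalCentral (p : F[X]) : S.natDegree (S.evalCentral p) = n * p.natDegree := by
  rw [evalCentral_apply, natDegree_evalX, Polynomial.natDegree_map]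

end Coordinates

section Norm

variable [NeZero n]

/-- The matrix of `h ↦ h * g` on the left `K[x]`-module `R` in the basis `1, t, …, t ^ (n - 1)`,
acting on row vectors. -/
noncomputable def mulRightMatrix (g : R) : Matrix (Fin n) (Fin n) K[X] :=
  Matrix.of fun i => (S.ofCoords_surjective (S.t ^ (i : ℕ) * g)).choose

theorem ofCoords_mulRightMatrix (g : R) (i : Fin n) :
    S.ofCoords (S.mulRightMatrix g i) = S.t ^ (i : ℕ) * g :=
  (S.ofCoords_surjective _).choose_spec

theorem mulRightMatrix_eq_of_ofCoords {g : R} {M : Matrix (Fin n) (Fin n) K[X]}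
    (hM : ∀ i, S.ofCoords (M i) = S.t ^ (i : ℕ) * g) : S.mulRightMatrix g = M :=
  funext fun i => S.ofCoords_injective <| by rw [ofCoords_mulRightMatrix, hM]

theorem ofCoords_vecMul_mulRightMatrix (v : Fin n → K[X]) (g : R) :
    S.ofCoords (Matrix.vecMul v (S.mulRightMatrix g)) = S.ofCoords v * g := by
  rw [S.ofCoords_apply v, Finset.sum_mul]
  simp only [mul_assoc, ← ofCoords_mulRightMatrix, ofCoords_apply, Matrix.vecMul, dotProduct,
    map_sum, map_mul, Finset.sum_mul, Finset.mul_sum]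
  exact Finset.sum_comm

theorem mulRightMatrix_mul (g h : R) :
    S.mulRightMatrix (g * h) = S.mulRightMatrix g * S.mulRightMatrix h :=
  S.mulRightMatrix_eq_of_ofCoords fun i => by
    rw [← mul_assoc, ← ofCoords_mulRightMatrix, ← ofCoords_vecMul_mulRightMatrix]
    rfl

theorem mulRightMatrix_one : S.mulRightMatrix 1 = 1 :=
  S.mulRightMatrix_eq_of_ofCoords fun i => by
    have hrow : (1 : Matrix (Fin n) (Fin n) K[X]) i = Pi.single i 1 :=
      funext fun _ => Matrix.one_eq_pi_single
    rw [hrow, ofCoords_single, map_one, one_mul, mul_one]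

theorem det_mulRightMatrix_ne_zero {g : R} (hg : g ≠ 0) : (S.mulRightMatrix g).det ≠ 0 := by
  have := S.noZeroDivisors
  rw [Ne, ← Matrix.exists_vecMul_eq_zero_iff]
  rintro ⟨v, hv, hvg⟩
  have hmul := S.ofCoords_vecMul_mulRightMatrix v g
  rw [hvg, map_zero, zero_eq_mul, or_iff_left hg] at hmul
  exact hv (S.ofCoords_injective (hmul.trans (map_zero _).symm))

theorem mulRightMatrix_of_t_mul_eq {g g' : R} (hg : S.t * g = g' * S.t) :
    S.mulRightMatrix g' = (S.mulRightMatrix g).map (Polynomial.map (σ : K →+* K)) := by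
  have := S.noZeroDivisors
  refine S.mulRightMatrix_eq_of_ofCoords fun i => mul_right_cancel₀ S.t_ne_zero ?_
  calc _ = S.t * S.ofCoords (S.mulRightMatrix g i) := (S.t_mul_ofCoords _).symm
    _ = S.t ^ (i : ℕ) * (S.t * g) := by
      rw [ofCoords_mulRightMatrix, ← mul_assoc, ← mul_assoc, (Commute.self_pow S.t i).eq]
    _ = S.t ^ (i : ℕ) * g' * S.t := by rw [hg, mul_assoc]

theorem map_det_mulRightMatrix (g : R) :
    (S.mulRightMatrix g).det.map (σ : K →+* K) = (S.mulRightMatrix g).det := by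
  obtain ⟨g', hg'⟩ := S.exists_t_mul_eq_mul_t g
  have hdet := congrArg (fun h => (S.mulRightMatrix h).det) hg'
  simp only [mulRightMatrix_mul, Matrix.det_mul] at hdet
  rw [mul_comm] at hdet
  calc _ = ((mapRingHom (σ : K →+* K)).mapMatrix (S.mulRightMatrix g)).det :=
      RingHom.map_det (mapRingHom (σ : K →+* K)) (S.mulRightMatrix g)
    _ = (S.mulRightMatrix g').det :=
      congrArg Matrix.det (S.mulRightMatrix_of_t_mul_eq hg').symm
    _ = (S.mulRightMatrix g).det :=
      (mul_right_cancel₀ (S.det_mulRightMatrix_ne_zero S.t_ne_zero) hdet).symm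

theorem exists_map_eq_det_mulRightMatrix (g : R) :
    ∃ p : F[X], p.map (algebraMap F K) = (S.mulRightMatrix g).det := by
  rw [← mem_lifts, lifts_iff_coeff_lifts]
  refine fun k => S.mem_range_algebraMap _ ?_
  conv_rhs => rw [← S.map_det_mulRightMatrix g, coeff_map]
  rfl

/-- The reduced norm `N`, as a multiplicative map into `F[x]`: the determinant of right
multiplication on the left `K[x]`-module `R`, whose coefficients lie in the fixed field of `σ`. -/
noncomputable def norm : R →* F[X] where
  toFun g := (S.exists_map_eq_det_mulRightMatrix g).choose
  map_one' := Polynomial.map_injective _ (algebraMap F K).injective <| by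
    rw [(S.exists_map_eq_det_mulRightMatrix 1).choose_spec, mulRightMatrix_one, Matrix.det_one,
      Polynomial.map_one]
  map_mul' g h := Polynomial.map_injective _ (algebraMap F K).injective <| by
    rw [Polynomial.map_mul, (S.exists_map_eq_det_mulRightMatrix (g * h)).choose_spec,
      (S.exists_map_eq_det_mulRightMatrix g).choose_spec,
      (S.exists_map_eq_det_mulRightMatrix h).choose_spec, mulRightMatrix_mul, Matrix.det_mul]

theorem map_norm (g : R) : (S.norm g).map (algebraMap F K) = (S.mulRightMatrix g).det :=
  (S.exists_map_eq_det_mulRightMatrix g).choose_spec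

theorem map_norm_eq_det {g : R} {M : Matrix (Fin n) (Fin n) K[X]}
    (hM : ∀ i : Fin n, S.t ^ (i : ℕ) * g =
      ∑ j : Fin n, ((M i j).sum fun k a => S.ι a * S.t ^ (n * k)) * S.t ^ (j : ℕ)) :
    (S.norm g).map (algebraMap F K) = M.det := by
  rw [map_norm, S.mulRightMatrix_eq_of_ofCoords fun i => ?_]
  simp only [ofCoords_apply, evalX_eq_sum]
  exact (hM i).symm

theorem norm_ne_zero {g : R} (hg : g ≠ 0) : S.norm g ≠ 0 := fun h =>
  S.det_mulRightMatrix_ne_zero hg (by rw [← map_norm, h, Polynomial.map_zero])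

theorem norm_evalCentral (p : F[X]) : S.norm (S.evalCentral p) = p ^ n := by
  have hscalar :
      S.mulRightMatrix (S.evalCentral p) = Matrix.scalar (Fin n) (p.map (algebraMap F K)) :=
    S.mulRightMatrix_eq_of_ofCoords fun i => by
      rw [(S.commute_evalCentral _ p).eq, evalCentral_apply, ← ofCoords_single]
      congr 1
      ext1 j
      simp [Matrix.diagonal_apply, Pi.single_apply, eq_comm]
  refine Polynomial.map_injective _ (algebraMap F K).injective ?_
  rw [map_norm, hscalar]
  simp

theorem evalCentral_norm_mem_span (g : R) : S.evalCentral (S.norm g) ∈ Ideal.span {g} := by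
  rw [Ideal.mem_span_singleton', evalCentral_apply, map_norm]
  refine ⟨S.ofCoords ((S.mulRightMatrix g).adjugate 0), ?_⟩
  have hrow : Matrix.vecMul ((S.mulRightMatrix g).adjugate 0) (S.mulRightMatrix g) =
      Pi.single 0 (S.mulRightMatrix g).det := by
    rw [← Matrix.mul_apply_eq_vecMul, Matrix.adjugate_mul]
    ext1 j
    simp [Matrix.one_eq_pi_single, Pi.single_apply]
  rw [← ofCoords_vecMul_mulRightMatrix, hrow, ofCoords_single]
  simp

theorem natDegree_norm_le (g : R) : (S.norm g).natDegree ≤ S.natDegree g := by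
  have hweight (i j : Fin n) (hij : S.mulRightMatrix g i j ≠ 0) :
      n * (S.mulRightMatrix g i j).natDegree + j ≤ i + S.natDegree g := by
    calc _ ≤ S.natDegree (S.t ^ (i : ℕ) * g) := by
          rw [mul_comm, ← ofCoords_mulRightMatrix]
          refine S.le_natDegree_of_coeff_ne_zero ?_
          rwa [coeff_ofCoords, coeff_natDegree, leadingCoeff_ne_zero]
      _ ≤ i + S.natDegree g := by
          simpa only [S.natDegree_t_pow] using S.natDegree_mul_le (S.t ^ (i : ℕ)) g
  have hdet := natDegree_det_le_of_weight _ (fun i : Fin n => (i : ℕ)) hweight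
  rw [Fintype.card_fin, ← map_norm, natDegree_map] at hdet
  exact Nat.le_of_mul_le_mul_left hdet (NeZero.pos n)

-- Writing `N(g) = u * g`, the two norm bounds for `u` and `g` add up to an equality.
theorem natDegree_norm {g : R} (hg : g ≠ 0) : (S.norm g).natDegree = S.natDegree g := by
  obtain ⟨u, hu⟩ := Ideal.mem_span_singleton'.1 (S.evalCentral_norm_mem_span g)
  have hu0 : u ≠ 0 := by
    rintro rfl
    rw [zero_mul, eq_comm, map_eq_zero_iff _ S.evalCentral_injective] at hu
    exact S.norm_ne_zero hg hu
  have hdeg := S.natDegree_mul hu0 hg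
  rw [hu, natDegree_evalCentral] at hdeg
  have hnorm := congrArg Polynomial.natDegree (map_mul S.norm u g)
  rw [hu, norm_evalCentral, natDegree_pow,
    Polynomial.natDegree_mul (S.norm_ne_zero hu0) (S.norm_ne_zero hg)] at hnorm
  have := S.natDegree_norm_le u
  have := S.natDegree_norm_le g
  omega

theorem isLocalHom_norm : IsLocalHom S.norm where
  map_nonunit g hg := by
    have := S.noZeroDivisors
    obtain ⟨u, hu⟩ := Ideal.mem_span_singleton'.1 (S.evalCentral_norm_mem_span g)
    exact isUnit_of_mul_isUnit_right (hu ▸ hg.map S.evalCentral)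

end Norm

section Factorization

/-- The ideal of all `p ∈ F[x]` such that `p(t ^ n)` is a left multiple of `f`; its monic
generator is the minimal central left multiple of `f`. -/
noncomputable def bound (f : R) : Ideal F[X] := (Ideal.span {f}).comap S.evalCentral

theorem mem_bound {f : R} {p : F[X]} : p ∈ S.bound f ↔ ∃ u, u * f = S.evalCentral p :=
  Ideal.mem_span_singleton'

theorem mul_mem_bound_mul {g d : R} {p q : F[X]} (hp : p ∈ S.bound g) (hq : q ∈ S.bound d) :
    p * q ∈ S.bound (g * d) := by
  obtain ⟨u, hu⟩ := S.mem_bound.1 hp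
  obtain ⟨v, hv⟩ := S.mem_bound.1 hq
  refine S.mem_bound.2 ⟨v * u, ?_⟩
  rw [map_mul, ← hv, ← mul_assoc (S.evalCentral p), ← (S.commute_evalCentral v p).eq, ← hu]
  simp only [mul_assoc]

theorem mul_mem_bound_of_mem_span_pair {f d : R} {p q r : F[X]} (hpq : p * q ∈ S.bound f)
    (hd : d ∈ Ideal.span {S.evalCentral q, f}) (hr : r ∈ S.bound d) : p * r ∈ S.bound f := by
  obtain ⟨a, b, hab⟩ := Ideal.mem_span_pair.1 hd
  obtain ⟨u, hu⟩ := S.mem_bound.1 hpq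
  obtain ⟨v, hv⟩ := S.mem_bound.1 hr
  refine S.mem_bound.2 ⟨v * (a * u + S.evalCentral p * b), ?_⟩
  calc v * (a * u + S.evalCentral p * b) * f
      = v * (a * (S.evalCentral p * S.evalCentral q) + S.evalCentral p * b * f) := by
        rw [← map_mul, ← hu]; noncomm_ring
    _ = v * (S.evalCentral p * d) := by
        rw [← mul_assoc a, (S.commute_evalCentral a p).eq, ← hab]; noncomm_ring
    _ = S.evalCentral (p * r) := by
        rw [← mul_assoc, (S.commute_evalCentral v p).eq, map_mul, ← hv, mul_assoc]

variable [NeZero n]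

theorem norm_mem_bound (f : R) : S.norm f ∈ S.bound f := S.evalCentral_norm_mem_span f

theorem bound_eq_span_norm_of_natDegree_le {f : R} (hf : f ≠ 0)
    (hmin : ∀ p ∈ S.bound f, p ≠ 0 → S.natDegree f ≤ p.natDegree) :
    S.bound f = Ideal.span {S.norm f} := by
  refine le_antisymm (fun p hp => ?_) ((Ideal.span_singleton_le_iff_mem _).2 (S.norm_mem_bound f))
  have hmod : p % S.norm f ∈ S.bound f := by
    rw [EuclideanDomain.mod_eq_sub_mul_div]
    exact sub_mem hp (Ideal.mul_mem_right _ _ (S.norm_mem_bound f))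
  rw [Ideal.mem_span_singleton, ← EuclideanDomain.mod_eq_zero]
  by_contra hmod0
  refine (natDegree_lt_natDegree hmod0 (degree_mod_lt p (S.norm_ne_zero hf))).not_ge ?_
  rw [S.natDegree_norm hf]
  exact hmin _ hmod hmod0

theorem bound_eq_span_norm_of_center_minimal {f : R} (hf : f ≠ 0) {h : F[X]}
    (hdeg : h.natDegree = S.natDegree f)
    (hmin : ∀ c ∈ Subring.center R, c ≠ 0 → (∃ g, c = g * f) →
      S.natDegree (S.evalCentral h) ≤ S.natDegree c) : S.bound f = Ideal.span {S.norm f} :=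
  S.bound_eq_span_norm_of_natDegree_le hf fun p hpf hp => by
    obtain ⟨u, hu⟩ := S.mem_bound.1 hpf
    have hle := hmin _ (S.evalCentral_mem_center p)
      ((map_ne_zero_iff _ S.evalCentral_injective).2 hp) ⟨u, hu.symm⟩
    rw [natDegree_evalCentral, natDegree_evalCentral, hdeg] at hle
    exact Nat.le_of_mul_le_mul_left hle (NeZero.pos n)

theorem exists_mul_eq_of_bound_eq {f : R} (hbound : S.bound f = Ideal.span {S.norm f})
    {p q : F[X]} (hp : p ≠ 0) (hq : q ≠ 0) (hpq : Associated (S.norm f) (p * q)) :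
    ∃ g d, f = g * d ∧ Associated (S.norm g) p ∧ Associated (S.norm d) q ∧
      S.bound d = Ideal.span {S.norm d} := by
  have := S.isPrincipalIdealRing
  have hmem (r : F[X]) : r ∈ S.bound f ↔ p * q ∣ r := by
    rw [hbound, Ideal.mem_span_singleton, hpq.dvd_iff_dvd_left]
  obtain ⟨d, hd⟩ := IsPrincipalIdealRing.principal (Ideal.span {S.evalCentral q, f})
  have hdiv (x : R) (hx : x ∈ ({S.evalCentral q, f} : Set R)) : ∃ u, u * d = x :=
    Ideal.mem_span_singleton'.1 (hd.le (Ideal.subset_span hx))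
  obtain ⟨g, rfl⟩ := hdiv f (by simp)
  have hqd : q ∈ S.bound d := S.mem_bound.2 (hdiv _ (by simp))
  have hp_dvd (r : F[X]) (hr : r ∈ S.bound g) : p ∣ r :=
    (mul_dvd_mul_iff_right hq).1 ((hmem _).1 (S.mul_mem_bound_mul hr hqd))
  have hq_dvd (r : F[X]) (hr : r ∈ S.bound d) : q ∣ r :=
    (mul_dvd_mul_iff_left hp).1 ((hmem _).1 (S.mul_mem_bound_of_mem_span_pair
      ((hmem _).2 dvd_rfl) (hd.ge (Ideal.mem_span_singleton_self d)) hr))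
  rw [map_mul] at hpq
  obtain ⟨hg_assoc, hd_assoc⟩ := associated_of_dvd_of_associated_mul hp hq
    (hp_dvd _ (S.norm_mem_bound g)) (hq_dvd _ (S.norm_mem_bound d)) hpq
  refine ⟨g, d, rfl, hg_assoc, hd_assoc, le_antisymm (fun r hr => ?_) ?_⟩
  · rw [Ideal.mem_span_singleton, hd_assoc.dvd_iff_dvd_left]
    exact hq_dvd r hr
  · exact (Ideal.span_singleton_le_iff_mem _).2 (S.norm_mem_bound d)

theorem exists_list_prod_eq_of_bound_eq {l : ℕ} {f : R}
    (hbound : S.bound f = Ideal.span {S.norm f}) (hs : Fin (l + 1) → F[X]) (hs0 : ∀ i, hs i ≠ 0)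
    (hnorm : Associated (S.norm f) (List.ofFn hs).prod) :
    ∃ fs : Fin (l + 1) → R, f = (List.ofFn fs).prod ∧ ∀ i, Associated (S.norm (fs i)) (hs i) := by
  induction l generalizing f with
  | zero => exact ⟨fun _ => f, by simp, Fin.forall_fin_one.2 (by simpa using hnorm)⟩
  | succ l ih =>
    rw [List.ofFn_succ, List.prod_cons] at hnorm
    have htail : (List.ofFn fun i => hs (Fin.succ i)).prod ≠ 0 :=
      List.prod_ne_zero fun h0 => (List.mem_ofFn.1 h0).elim fun i => hs0 i.succ
    obtain ⟨g, d, rfl, hg, hd, hbound_d⟩ :=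
      S.exists_mul_eq_of_bound_eq hbound (hs0 0) htail hnorm
    obtain ⟨fs, hprod, hfs⟩ := ih hbound_d _ (fun i => hs0 i.succ) hd
    exact ⟨Fin.cons g fs, by simp [List.ofFn_succ, hprod], Fin.cases hg hfs⟩

theorem eq_one_of_isUnit_norm {f : R} (hf : S.coeff f (S.natDegree f) = 1)
    (hnorm : IsUnit (S.norm f)) : f = 1 := by
  have hf0 : f ≠ 0 := by
    rintro rfl
    simp at hf
  have hdeg : S.natDegree f = 0 := by rw [← S.natDegree_norm hf0, natDegree_eq_zero_of_isUnit hnorm]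
  rw [S.eq_ι_of_natDegree_eq_zero hdeg, ← hdeg, hf, map_one]

end Factorization

/-- The cyclic structure on `K[t;σ]` when `K/F` is Galois of degree `n` with group generated by
`σ`. -/
def ofIsGalois [FiniteDimensional F K] [IsGalois F K] (hn : Module.finrank F K = n)
    (hσ : ∀ τ : K ≃ₐ[F] K, τ ∈ Subgroup.zpowers σ) (S : SkewPolynomialRing (σ : K →+* K) R) :
    CyclicSkewPolynomialRing σ n R where
  toSkewPolynomialRing := S
  pow_eq_one := by rw [← hn, ← IsGalois.card_aut_eq_finrank, pow_card_eq_one']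
  mem_range_algebraMap a ha := by
    have hfix : Subgroup.zpowers σ ≤ MulAction.stabilizer (K ≃ₐ[F] K) a := by
      rwa [Subgroup.zpowers_le]
    exact IntermediateField.mem_bot.1 ((IsGalois.mem_bot_iff_fixed a).2 fun τ => hfix (hσ τ))

end CyclicSkewPolynomialRing

theorem norm_factorization_gives_factorization_general {F K R : Type*} [Field F] [Field K]
    [Algebra F K] [Ring R] {σ : K ≃ₐ[F] K} {n : ℕ} [NeZero n]
    (S : CyclicSkewPolynomialRing σ n R) {f : R} (hf : S.coeff f (S.natDegree f) = 1)
    (hbound : S.bound f = Ideal.span {S.norm f}) {l : ℕ} (hs : Fin l → F[X])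
    (hirr : ∀ i, Irreducible (hs i)) (hnorm : Associated (S.norm f) (List.ofFn hs).prod) :
    ∃ fs : Fin l → R, f = (List.ofFn fs).prod ∧ ∀ i, Irreducible (fs i) ∧
      Associated (S.norm (fs i)) (hs i) ∧ S.natDegree (fs i) = (hs i).natDegree := by
  have := S.isLocalHom_norm
  obtain ⟨fs, hprod, hfs⟩ : ∃ fs : Fin l → R, f = (List.ofFn fs).prod ∧
      ∀ i, Associated (S.norm (fs i)) (hs i) := by
    cases l with
    | zero => exact ⟨Fin.elim0, S.eq_one_of_isUnit_norm hf (by simpa using hnorm), nofun⟩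
    | succ l => exact S.exists_list_prod_eq_of_bound_eq hbound hs (fun i => (hirr i).ne_zero) hnorm
  refine ⟨fs, hprod, fun i => ?_⟩
  have hfs_irr : Irreducible (fs i) := .of_map (f := S.norm) ((hfs i).irreducible_iff.2 (hirr i))
  refine ⟨hfs_irr, hfs i, ?_⟩
  rw [← S.natDegree_norm hfs_irr.ne_zero]
  exact natDegree_eq_of_degree_eq (degree_eq_degree_of_associated (hfs i))

/-- If `f ∈ R = K[t;σ]` is monic of degree `m` with `gcrd(f,t)=1` and
`deg ĥ = m`, and `N(f) = ĥ₁⋯ĥ_l` with each `ĥ_i ∈ F[x]` irreducible, then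
`f = f₁⋯f_l` into irreducibles with `N(f_i) = ĥ_i` up to a unit scalar and
`deg f_i = deg ĥ_i`. -/
theorem norm_factorization_gives_factorization
    (F K : Type) [Field F] [Field K] [Algebra F K] [IsGalois F K]
    (n : ℕ) (hn : 0 < n) (hdim : Module.finrank F K = n)
    (σ : K ≃ₐ[F] K) (hσgen : ∀ τ : K ≃ₐ[F] K, τ ∈ Subgroup.zpowers σ)
    (R : Type) [Ring R] (ι : K →+* R) (t : R)
    (hmul : ∀ a : K, t * ι a = ι (σ a) * t)
    (coeff : R →+ (ℕ →₀ K))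
    (hcoeff : ∀ (a : K) (i : ℕ), coeff (ι a * t ^ i) = Finsupp.single i a)
    (hrepr : ∀ x : R, (coeff x).sum (fun i a => ι a * t ^ i) = x)
    (ρ : R → Matrix (Fin n) (Fin n) (Polynomial K))
    (hρ : ∀ (g : R) (i : Fin n), t ^ (i : ℕ) * g =
      ∑ j : Fin n, ((ρ g i j).sum fun k a => ι a * t ^ (n * k)) * t ^ (j : ℕ))
    (N : R → Polynomial K) (hN : ∀ g : R, N g = (ρ g).det)
    (f : R) (m : ℕ)
    (hdeg : coeff f m ≠ 0 ∧ ∀ i : ℕ, m < i → coeff f i = 0)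
    (hfmonic : coeff f m = 1)
    (hgcrd : ∃ p q : R, p * f + q * t = 1)
    -- minimal central left multiple ĥ of degree m:
    (hhat : Polynomial F) (hmonic : hhat.Monic)
    (hleft : ∃ g : R, (hhat.sum fun k a => ι (algebraMap F K a) * t ^ (n * k)) = g * f)
    (hcentral : (hhat.sum fun k a => ι (algebraMap F K a) * t ^ (n * k)) ∈ Subring.center R)
    (hminimal : ∀ c : R, c ∈ Subring.center R → c ≠ 0 → (∃ g : R, c = g * f) →
      (coeff (hhat.sum fun k a => ι (algebraMap F K a) * t ^ (n * k))).support.sup id ≤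
        (coeff c).support.sup id)
    (hdeghat : hhat.natDegree = m)
    -- a factorization N(f) = ĥ₁⋯ĥ_l into irreducibles in F[x]:
    (l : ℕ) (hs : Fin l → Polynomial F) (hirr : ∀ i, Irreducible (hs i))
    (hNf : N f = Polynomial.map (algebraMap F K) (List.ofFn hs).prod) :
    ∃ fs : Fin l → R,
      f = (List.ofFn fs).prod ∧
      ∀ i, Irreducible (fs i) ∧
        (∃ c : K, c ≠ 0 ∧ N (fs i) = Polynomial.C c * (hs i).map (algebraMap F K)) ∧
        (coeff (fs i)).support.sup id = (hs i).natDegree := by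
  have := Module.finite_of_finrank_pos (hdim ▸ hn)
  have : NeZero n := ⟨hn.ne'⟩
  let S : CyclicSkewPolynomialRing σ n R :=
    .ofIsGalois hdim hσgen ⟨ι, t, hmul, coeff, hcoeff, hrepr⟩
  have hnorm (g : R) : N g = (S.norm g).map (algebraMap F K) := by
    rw [hN, S.map_norm_eq_det (hρ g)]
  have hf : S.natDegree f = m := S.natDegree_eq_of_coeff_ne_zero hdeg.1 hdeg.2
  have hf0 : f ≠ 0 := by
    rintro rfl
    simp at hdeg
  have hbound : S.bound f = Ideal.span {S.norm f} :=
    S.bound_eq_span_norm_of_center_minimal hf0 (hdeghat.trans hf.symm) <| by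
      rwa [S.evalCentral_eq_sum]
  have hfactor : S.norm f = (List.ofFn hs).prod :=
    Polynomial.map_injective _ (algebraMap F K).injective ((hnorm f).symm.trans hNf)
  obtain ⟨fs, hprod, hfs⟩ := norm_factorization_gives_factorization_general S (hf ▸ hfmonic) hbound
    hs hirr (.of_eq hfactor)
  refine ⟨fs, hprod, fun i => ⟨(hfs i).1, ?_, (hfs i).2.2⟩⟩
  obtain ⟨c, hc, hci⟩ := exists_eq_C_mul_of_associated (hfs i).2.1
  exact ⟨algebraMap F K c, by simpa using hc.ne_zero, by simp [hnorm, hci]⟩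
end

section
/- Let K/F be cyclic Galois of degree n, R = K[t;σ], f ∈ R monic with gcrd(f,t)=1 and deg_x ĥ = deg_t f. If N(f) is a product of l pairwise distinct (non-associate) irreducible polynomials in F[x], then f has exactly l! distinct factorizations into irreducible monic factors in R, one for each ordering of the irreducible factors of N(f). -/
/-!
The reduced norm `N` is multiplicative, and `g` is a right divisor of the central element `N(g)`.
If `N(f) = p q` with `p` and `q` coprime, then `R f + R q = R b` for a monic `b`, and `f = a b` is
the only factorization of `f` with `N(a)` and `N(b)` associated to `p` and `q`. Peeling off one
factor at a time, each ordering of the irreducible factors of `N(f)` comes from exactly one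
factorization of `f`, whose factors are irreducible because their norms are. Conversely, an
irreducible `g` with squarefree norm has irreducible norm, since a proper coprime splitting of
`N(g)` would split `g`; so every factorization of `f` arises from an ordering.
-/

open Polynomial

section CommutativeFactorization

variable {A : Type*}

theorem associated_and_associated_of_mul [CommSemiring A] [IsDomain A] {a b p q : A}
    (haq : IsCoprime a q) (hbp : IsCoprime b p) (h : Associated (a * b) (p * q)) :
    Associated a p ∧ Associated b q :=
  ⟨associated_of_dvd_dvd
    (haq.dvd_of_dvd_mul_right ((dvd_mul_right a b).trans h.dvd))
    (hbp.symm.dvd_of_dvd_mul_right ((dvd_mul_right p q).trans h.symm.dvd)),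
   associated_of_dvd_dvd
    (hbp.dvd_of_dvd_mul_left ((dvd_mul_left b a).trans h.dvd))
    (haq.symm.dvd_of_dvd_mul_left ((dvd_mul_left q p).trans h.symm.dvd))⟩

theorem exists_perm_associated {ι : Type*} [Fintype ι] [CommMonoidWithZero A]
    [DecompositionMonoid A] {p q : ι → A} (hp : ∀ i, Irreducible (p i))
    (hq : ∀ i, Irreducible (q i)) (hsq : Squarefree (∏ i, p i)) (h : ∏ i, p i ∣ ∏ i, q i) :
    ∃ π : Equiv.Perm ι, ∀ i, Associated (p i) (q (π i)) := by
  classical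
  have hassoc : ∀ i, ∃ j, Associated (p i) (q j) := fun i ↦ by
    obtain ⟨j, -, hj⟩ := (hp i).prime.exists_mem_finset_dvd
      ((Finset.dvd_prod_of_mem p (Finset.mem_univ i)).trans h)
    exact ⟨j, (hp i).associated_of_dvd (hq j) hj⟩
  choose π hπ using hassoc
  have hinj : Function.Injective π := by
    intro i j hij
    by_contra hne
    have hpij : Associated (p i) (p j) := (hπ i).trans (hij ▸ (hπ j).symm)
    have hdvd : p i * p i ∣ ∏ k, p k := by
      rw [← Finset.mul_prod_erase _ _ (Finset.mem_univ i)]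
      exact mul_dvd_mul_left _ (hpij.dvd.trans
        (Finset.dvd_prod_of_mem p (Finset.mem_erase.mpr ⟨Ne.symm hne, Finset.mem_univ j⟩)))
    exact (hp i).not_isUnit (hsq _ hdvd)
  exact ⟨Equiv.ofBijective π (Finite.injective_iff_bijective.mp hinj), hπ⟩

end CommutativeFactorization

/-- A submonoid of representatives of the nonzero elements of `R` modulo left multiplication by
units; it plays the role of the monic elements. -/
structure IsMonicSubmonoid {R : Type*} [MonoidWithZero R] (S : Submonoid R) : Prop where
  zero_notMem : 0 ∉ S
  existsUnique_units_mul_mem : ∀ r : R, r ≠ 0 → ∃! u : Rˣ, ↑u * r ∈ S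

namespace IsMonicSubmonoid

section Monoid

variable {R : Type*} [MonoidWithZero R] {S : Submonoid R}

theorem ne_zero (hS : IsMonicSubmonoid S) {r : R} (hr : r ∈ S) : r ≠ 0 :=
  ne_of_mem_of_not_mem hr hS.zero_notMem

theorem units_eq_one (hS : IsMonicSubmonoid S) {u : Rˣ} {r : R} (hr : r ∈ S)
    (hur : ↑u * r ∈ S) : u = 1 :=
  (hS.existsUnique_units_mul_mem r (hS.ne_zero hr)).unique hur (by simpa using hr)

theorem eq_one_of_isUnit (hS : IsMonicSubmonoid S) {r : R} (hr : r ∈ S) (hu : IsUnit r) :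
    r = 1 := by
  obtain ⟨u, rfl⟩ := hu
  have hu1 : u = 1 := hS.units_eq_one S.one_mem (by simpa using hr)
  rw [hu1, Units.val_one]

theorem left_mem_of_mul_mem (hS : IsMonicSubmonoid S) {a b : R} (hab : a * b ∈ S) (hb : b ∈ S) :
    a ∈ S := by
  have ha : a ≠ 0 := left_ne_zero_of_mul (hS.ne_zero hab)
  obtain ⟨u, hua, -⟩ := hS.existsUnique_units_mul_mem a ha
  have hu : u = 1 := hS.units_eq_one hab (by simpa only [mul_assoc] using S.mul_mem hua hb)
  simpa [hu] using hua

end Monoid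

theorem eq_of_span_singleton_eq {R : Type*} [Ring R] [IsDomain R] {S : Submonoid R}
    (hS : IsMonicSubmonoid S) {b b' : R} (hb : b ∈ S) (hb' : b' ∈ S)
    (h : Ideal.span {b} = Ideal.span {b'}) : b = b' := by
  obtain ⟨e, he⟩ := Ideal.mem_span_singleton'.mp (h ▸ Ideal.mem_span_singleton_self b)
  obtain ⟨e', he'⟩ := Ideal.mem_span_singleton'.mp (h ▸ Ideal.mem_span_singleton_self b')
  have hmul : e * e' = 1 := mul_right_cancel₀ (hS.ne_zero hb) (by rw [mul_assoc, he', he, one_mul])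
  obtain ⟨u, rfl⟩ : IsUnit e := IsUnit.of_mul_eq_one e' hmul
  have hu1 : u = 1 := hS.units_eq_one hb' (he ▸ hb)
  rw [← he, hu1, Units.val_one, one_mul]

end IsMonicSubmonoid

/-- `M` is a reduced norm of rank `n` from the ring `R` to a commutative ring `A` that is mapped
by `c` to the center of `R`: the norm of a scalar is its `n`-th power, and each element is a right
divisor of its norm. -/
structure IsReducedNorm {A R : Type*} [CommRing A] [Ring R] (M : R →* A) (c : A →+* R)
    (n : ℕ) : Prop where
  commute : ∀ p r, Commute (c p) r
  norm_map : ∀ p, M (c p) = p ^ n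
  map_norm_mem_span : ∀ g, c (M g) ∈ Ideal.span {g}

namespace IsReducedNorm

variable {A R : Type*} [CommRing A] [Ring R] {M : R →* A} {c : A →+* R} {n : ℕ}

theorem isUnit_of_isUnit_norm (H : IsReducedNorm M c n) {g : R} (hg : IsUnit (M g)) :
    IsUnit g := by
  have hleft : ∀ x : R, IsUnit (M x) → ∃ y, y * x = 1 := fun x hx ↦ by
    have hspan : Ideal.span {x} = ⊤ :=
      Ideal.eq_top_of_isUnit_mem _ (H.map_norm_mem_span x) (hx.map c)
    exact Ideal.mem_span_singleton'.mp (hspan ▸ Submodule.mem_top)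
  obtain ⟨h, hhg⟩ := hleft g hg
  have hMh : IsUnit (M h) := .of_mul_eq_one (M g) (by rw [← map_mul, hhg, map_one])
  obtain ⟨k, hkh⟩ := hleft h hMh
  exact isUnit_iff_exists.mpr ⟨h, left_inv_eq_right_inv hkh hhg ▸ hkh, hhg⟩

theorem irreducible_of_irreducible_norm (H : IsReducedNorm M c n) {g : R}
    (hg : Irreducible (M g)) : Irreducible g where
  not_isUnit h := hg.not_isUnit (h.map M)
  isUnit_or_isUnit _ _ hab :=
    (hg.isUnit_or_isUnit (by rw [hab, map_mul])).imp H.isUnit_of_isUnit_norm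
      H.isUnit_of_isUnit_norm

theorem norm_dvd_pow (H : IsReducedNorm M c n) {p : A} {a : R} (h : c p ∈ Ideal.span {a}) :
    M a ∣ p ^ n := by
  obtain ⟨r, hr⟩ := Ideal.mem_span_singleton'.mp h
  rw [← H.norm_map, ← hr, map_mul]
  exact dvd_mul_left _ _

theorem map_mem_span_of_norm_dvd (H : IsReducedNorm M c n) {g : R} {p : A} (h : M g ∣ p) :
    c p ∈ Ideal.span {g} := by
  obtain ⟨q, rfl⟩ := h
  rw [mul_comm, map_mul]
  exact Ideal.mul_mem_left _ _ (H.map_norm_mem_span g)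

theorem span_singleton_eq_span_pair (H : IsReducedNorm M c n) {a b : R} {q : A}
    (hcop : IsCoprime (M a) q) (hb : M b ∣ q) :
    Ideal.span {b} = Ideal.span {a * b, c q} := by
  apply le_antisymm
  · obtain ⟨u, v, huv⟩ := hcop
    obtain ⟨a', ha'⟩ := Ideal.mem_span_singleton'.mp (H.map_norm_mem_span a)
    refine (Ideal.span_singleton_le_iff_mem _).mpr
      (Ideal.mem_span_pair.mpr ⟨c u * a', c v * b, ?_⟩)
    calc c u * a' * (a * b) + c v * b * c q
        = c u * (a' * a) * b + c v * c q * b := by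
          rw [mul_assoc (c v), ← (H.commute q b).eq]; simp only [mul_assoc]
      _ = c (u * M a + v * q) * b := by rw [ha', map_add, map_mul, map_mul, add_mul]
      _ = b := by rw [huv, map_one, one_mul]
  · rw [Ideal.span_le, Set.pair_subset_iff]
    exact ⟨Ideal.mul_mem_left _ _ (Ideal.mem_span_singleton_self b),
      H.map_mem_span_of_norm_dvd hb⟩

variable [IsDomain R] {S : Submonoid R}

theorem eq_and_eq_of_mul_eq_mul (H : IsReducedNorm M c n) (hS : IsMonicSubmonoid S)
    {a b a' b' : R} {p q : A} (hpq : IsCoprime p q) (h : a * b = a' * b')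
    (hb : b ∈ S) (hb' : b' ∈ S) (hap : M a ∣ p) (hbq : M b ∣ q) (hap' : M a' ∣ p)
    (hbq' : M b' ∣ q) : a = a' ∧ b = b' := by
  have hbb' : b = b' := hS.eq_of_span_singleton_eq hb hb' <| by
    rw [H.span_singleton_eq_span_pair (hpq.of_isCoprime_of_dvd_left hap) hbq, h,
      ← H.span_singleton_eq_span_pair (hpq.of_isCoprime_of_dvd_left hap') hbq']
  subst hbb'
  exact ⟨mul_right_cancel₀ (hS.ne_zero hb) h, rfl⟩

theorem map_mem_span_left_factor (H : IsReducedNorm M c n) {a b : R} {p q : A} (hb : b ≠ 0)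
    (hspan : Ideal.span {b} = Ideal.span {a * b, c q})
    (hpq : c (p * q) ∈ Ideal.span {a * b}) : c p ∈ Ideal.span {a} := by
  obtain ⟨u, v, huv⟩ := Ideal.mem_span_pair.mp (hspan ▸ Ideal.mem_span_singleton_self b)
  obtain ⟨r, hr⟩ : ∃ r, r * b = c q := Ideal.mem_span_singleton'.mp
    (hspan ▸ Ideal.subset_span (Set.mem_insert_of_mem _ rfl))
  obtain ⟨g, hg⟩ := Ideal.mem_span_singleton'.mp hpq
  have hone : u * a + v * r = 1 := mul_right_cancel₀ hb <| by
    rw [add_mul, mul_assoc, mul_assoc, hr, huv, one_mul]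
  have hpr : c p * r = g * a := mul_right_cancel₀ hb <| by
    rw [mul_assoc, hr, ← map_mul, ← hg, mul_assoc]
  refine Ideal.mem_span_singleton'.mpr ⟨u * c p + v * g, ?_⟩
  calc (u * c p + v * g) * a = u * (c p * a) + v * (c p * r) := by
        rw [hpr, add_mul, mul_assoc, mul_assoc]
    _ = (u * a + v * r) * c p := by
        rw [(H.commute p a).eq, (H.commute p r).eq, add_mul, mul_assoc, mul_assoc]
    _ = c p := by rw [hone, one_mul]

variable [IsBezout R] [IsDomain A]

theorem exists_mul_eq_of_associated_norm (H : IsReducedNorm M c n) {f : R} (hf : f ≠ 0) {p q : A}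
    (hpq : IsCoprime p q) (h : Associated (M f) (p * q)) :
    ∃ a b, a * b = f ∧ Associated (M a) p ∧ Associated (M b) q := by
  obtain ⟨b, hspan⟩ : ∃ b, Ideal.span {f, c q} = Ideal.span {b} :=
    (IsBezout.isPrincipal_of_FG _ (Submodule.fg_span (Set.toFinite {f, c q}))).principal
  obtain ⟨a, rfl⟩ : ∃ a, a * b = f := Ideal.mem_span_singleton'.mp
    (hspan ▸ Ideal.subset_span (Set.mem_insert _ _))
  have hcq : c q ∈ Ideal.span {b} := hspan ▸ Ideal.subset_span (Set.mem_insert_of_mem _ rfl)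
  have hcp : c p ∈ Ideal.span {a} := H.map_mem_span_left_factor (right_ne_zero_of_mul hf)
    hspan.symm (H.map_mem_span_of_norm_dvd h.dvd)
  have hap : M a ∣ p ^ n := H.norm_dvd_pow hcp
  have hbq : M b ∣ q ^ n := H.norm_dvd_pow hcq
  rw [map_mul] at h
  exact ⟨a, b, rfl, associated_and_associated_of_mul
    (hpq.pow_left.of_isCoprime_of_dvd_left hap) (hpq.symm.pow_left.of_isCoprime_of_dvd_left hbq) h⟩

theorem irreducible_norm_of_irreducible [IsPrincipalIdealRing A] (H : IsReducedNorm M c n) {g : R}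
    (hg : Irreducible g) (hsq : Squarefree (M g)) : Irreducible (M g) where
  not_isUnit h := hg.not_isUnit (H.isUnit_of_isUnit_norm h)
  isUnit_or_isUnit p q hpq := by
    have hcop : IsCoprime p q := (squarefree_mul_iff.mp (hpq ▸ hsq)).1.isCoprime
    obtain ⟨a, b, rfl, hap, hbq⟩ :=
      H.exists_mul_eq_of_associated_norm hg.ne_zero hcop (.of_eq hpq)
    exact (hg.isUnit_or_isUnit rfl).imp (fun ha ↦ hap.isUnit (ha.map M))
      fun hb ↦ hbq.isUnit (hb.map M)

theorem exists_mem_mul_eq_of_associated_norm (H : IsReducedNorm M c n) (hS : IsMonicSubmonoid S)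
    {f : R} (hf : f ∈ S) {p q : A} (hpq : IsCoprime p q) (h : Associated (M f) (p * q)) :
    ∃ a ∈ S, ∃ b ∈ S, a * b = f ∧ Associated (M a) p ∧ Associated (M b) q := by
  obtain ⟨a, b, rfl, hap, hbq⟩ := H.exists_mul_eq_of_associated_norm (hS.ne_zero hf) hpq h
  obtain ⟨u, hu, -⟩ :=
    hS.existsUnique_units_mul_mem b (right_ne_zero_of_mul (hS.ne_zero hf))
  have hab : a * ↑u⁻¹ * (↑u * b) = a * b := by
    rw [mul_assoc, Units.inv_mul_cancel_left]
  refine ⟨a * ↑u⁻¹, hS.left_mem_of_mul_mem (hab ▸ hf) hu, ↑u * b, hu, hab, ?_, ?_⟩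
  · rw [map_mul]
    exact (associated_mul_unit_left _ _ (u⁻¹.isUnit.map M)).trans hap
  · rw [map_mul]
    exact (associated_unit_mul_left _ _ (u.isUnit.map M)).trans hbq

theorem existsUnique_ofFn_prod_eq (H : IsReducedNorm M c n) (hS : IsMonicSubmonoid S) {l : ℕ}
    {f : R} (hf : f ∈ S) {p : Fin l → A} (hp : Pairwise fun i j ↦ IsCoprime (p i) (p j))
    (hM : Associated (M f) (∏ i, p i)) :
    ∃! g : Fin l → R, f = (List.ofFn g).prod ∧ ∀ i, g i ∈ S ∧ Associated (M (g i)) (p i) := by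
  induction l generalizing f with
  | zero =>
    have hf1 : f = 1 := hS.eq_one_of_isUnit hf
      (H.isUnit_of_isUnit_norm (by simpa using hM))
    exact ⟨Fin.elim0, ⟨by simpa using hf1, fun i ↦ i.elim0⟩, fun _ _ ↦ Subsingleton.elim _ _⟩
  | succ l ih =>
    have hcop : IsCoprime (p 0) (∏ i : Fin l, p i.succ) :=
      .prod_right fun i _ ↦ hp (Fin.succ_ne_zero i).symm
    rw [Fin.prod_univ_succ] at hM
    obtain ⟨a, ha, b, hb, rfl, hap, hbp⟩ := H.exists_mem_mul_eq_of_associated_norm hS hf hcop hM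
    obtain ⟨g, ⟨rfl, hgp⟩, hg_unique⟩ :=
      ih hb (fun i j hij ↦ hp (Fin.succ_injective l |>.ne hij)) hbp
    refine ⟨Fin.cons a g, ⟨by simp [List.ofFn_succ], Fin.cases ⟨ha, hap⟩ hgp⟩, ?_⟩
    rintro g' ⟨hg'prod, hg'⟩
    rw [List.ofFn_succ, List.prod_cons] at hg'prod
    have htail_mem : (List.ofFn fun i : Fin l ↦ g' i.succ).prod ∈ S :=
      S.list_prod_mem (List.forall_mem_ofFn_iff.mpr fun i ↦ (hg' i.succ).1)
    have htail_norm : Associated (M (List.ofFn fun i : Fin l ↦ g' i.succ).prod)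
        (∏ i : Fin l, p i.succ) := by
      rw [map_list_prod, List.map_ofFn, List.prod_ofFn]
      exact .prod _ _ _ fun i _ ↦ (hg' i.succ).2
    obtain ⟨rfl, htail⟩ := H.eq_and_eq_of_mul_eq_mul hS hcop hg'prod hb htail_mem
      hap.dvd hbp.dvd (hg' 0).2.dvd htail_norm.dvd
    rw [← hg_unique (fun i ↦ g' i.succ) ⟨htail, fun i ↦ hg' i.succ⟩]
    exact (Fin.cons_self_tail g').symm

variable [IsPrincipalIdealRing A]

theorem exists_perm_associated_norm (H : IsReducedNorm M c n) {l : ℕ} {g : Fin l → R}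
    (hg : ∀ i, Irreducible (g i)) {p : Fin l → A} (hp : ∀ i, Irreducible (p i))
    (hsq : Squarefree (∏ i, p i)) (hM : Associated (M (List.ofFn g).prod) (∏ i, p i)) :
    ∃ π : Equiv.Perm (Fin l), ∀ i, Associated (M (g i)) (p (π i)) := by
  have hMprod : M (List.ofFn g).prod = ∏ i, M (g i) := by
    rw [map_list_prod, List.map_ofFn, List.prod_ofFn]; rfl
  rw [hMprod] at hM
  have hsq' : Squarefree (∏ i, M (g i)) := hsq.squarefree_of_dvd hM.dvd
  have hirr : ∀ i, Irreducible (M (g i)) := fun i ↦ H.irreducible_norm_of_irreducible (hg i)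
    (hsq'.squarefree_of_dvd (Finset.dvd_prod_of_mem (fun i ↦ M (g i)) (Finset.mem_univ i)))
  exact exists_perm_associated hirr hp hsq' hM.dvd

theorem card_irreducible_factorizations (H : IsReducedNorm M c n) (hS : IsMonicSubmonoid S)
    {l : ℕ} {f : R} (hf : f ∈ S) {p : Fin l → A} (hp : ∀ i, Irreducible (p i))
    (hdist : ∀ i j, i ≠ j → ¬ Associated (p i) (p j))
    (hM : Associated (M f) (∏ i, p i)) :
    Nat.card {g : Fin l → R //
      f = (List.ofFn g).prod ∧ ∀ i, Irreducible (g i) ∧ g i ∈ S} = l.factorial := by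
  have hcop : Pairwise fun i j ↦ IsCoprime (p i) (p j) := fun i j hij ↦
    (hp i).coprime_iff_not_dvd.mpr fun hdvd ↦ hdist i j hij ((hp i).associated_of_dvd (hp j) hdvd)
  have hsq : Squarefree (∏ i, p i) := Finset.squarefree_prod_of_pairwise_isCoprime
    (fun i _ j _ hij ↦ (hcop hij).isRelPrime) fun i _ ↦ (hp i).squarefree
  have hfac (π : Equiv.Perm (Fin l)) := H.existsUnique_ofFn_prod_eq hS hf (p := fun i ↦ p (π i))
    (fun i j hij ↦ hcop (π.injective.ne hij)) (by rwa [Equiv.prod_comp π p])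
  choose G hG hG_unique using hfac
  let Φ (π : Equiv.Perm (Fin l)) : {g : Fin l → R //
      f = (List.ofFn g).prod ∧ ∀ i, Irreducible (g i) ∧ g i ∈ S} :=
    ⟨G π, (hG π).1, fun i ↦ ⟨H.irreducible_of_irreducible_norm
      (((hG π).2 i).2.symm.irreducible (hp _)), ((hG π).2 i).1⟩⟩
  have hΦ : Φ.Bijective := by
    refine ⟨fun π π' h ↦ Equiv.ext fun i ↦ ?_, ?_⟩
    · have hGi : G π i = G π' i := congrFun (congrArg Subtype.val h) i
      by_contra hne
      exact hdist _ _ hne (((hG π).2 i).2.symm.trans (hGi ▸ ((hG π').2 i).2))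
    · rintro ⟨g, rfl, hg⟩
      obtain ⟨π, hπ⟩ := H.exists_perm_associated_norm (fun i ↦ (hg i).1) hp hsq hM
      exact ⟨π, Subtype.ext (hG_unique π g ⟨rfl, fun i ↦ ⟨(hg i).2, hπ i⟩⟩).symm⟩
  rw [← Nat.card_eq_of_bijective Φ hΦ, Nat.card_perm, Nat.card_fin]

end IsReducedNorm

/-- The elements `b i` are independent for left multiplication by scalars from `A`, acting through
`φ`, and the rows of `ρ g` are the coordinates of the products `b i * g`. -/
structure IsRightMulMatrix {ι A R : Type*} [Fintype ι] [CommRing A] [Ring R] (φ : A →+* R)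
    (b : ι → R) (ρ : R → Matrix ι ι A) : Prop where
  basis_mul : ∀ g i, b i * g = ∑ j, φ (ρ g i j) * b j
  injective : Function.Injective fun x : ι → A ↦ ∑ j, φ (x j) * b j

namespace IsRightMulMatrix

variable {ι A R : Type*} [Fintype ι] [CommRing A] [Ring R] {φ : A →+* R} {b : ι → R}
  {ρ : R → Matrix ι ι A}

theorem sum_mul_vecMul (H : IsRightMulMatrix φ b ρ) (x : ι → A) (g : R) :
    (∑ i, φ (x i) * b i) * g = ∑ j, φ (Matrix.vecMul x (ρ g) j) * b j := by
  simp only [Matrix.vecMul, dotProduct, map_sum, map_mul, Finset.sum_mul, mul_assoc,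
    H.basis_mul g, Finset.mul_sum]
  exact Finset.sum_comm

theorem map_mul (H : IsRightMulMatrix φ b ρ) (g h : R) : ρ (g * h) = ρ g * ρ h := by
  funext i
  apply H.injective
  calc ∑ j, φ (ρ (g * h) i j) * b j = (∑ j, φ (ρ g i j) * b j) * h := by
        rw [← H.basis_mul, ← mul_assoc, H.basis_mul g]
    _ = ∑ j, φ ((ρ g * ρ h) i j) * b j := H.sum_mul_vecMul _ h

theorem map_mul_of_semicommute (H : IsRightMulMatrix φ b ρ) {τ : A →+* A} {t : R}
    (hτ : ∀ p, t * φ p = φ (τ p) * t) (ht : ∀ i, Commute t (b i)) (g : R) :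
    ρ (t * g) = (ρ g).map τ * ρ t := by
  funext i
  apply H.injective
  calc ∑ j, φ (ρ (t * g) i j) * b j = t * ∑ j, φ (ρ g i j) * b j := by
        rw [← H.basis_mul, ← H.basis_mul, ← mul_assoc, ← (ht i).eq, mul_assoc]
    _ = (∑ j, φ (τ (ρ g i j)) * b j) * t := by
        simp only [Finset.mul_sum, Finset.sum_mul, ← mul_assoc, hτ]
        simp only [mul_assoc, (ht _).eq]
    _ = ∑ j, φ (((ρ g).map τ * ρ t) i j) * b j := H.sum_mul_vecMul _ t

variable [DecidableEq ι]

theorem apply_scalar (H : IsRightMulMatrix φ b ρ) {p : A} (hp : ∀ i, Commute (φ p) (b i)) :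
    ρ (φ p) = Matrix.scalar ι p := by
  funext i
  apply H.injective
  simp only [← H.basis_mul, ← (hp i).eq, Matrix.scalar_apply, Matrix.diagonal_apply, apply_ite φ,
    map_zero, ite_mul, zero_mul, Finset.sum_ite_eq, Finset.mem_univ, if_true]

theorem det_scalar (H : IsRightMulMatrix φ b ρ) {p : A} (hp : ∀ i, Commute (φ p) (b i)) :
    (ρ (φ p)).det = p ^ Fintype.card ι := by
  rw [H.apply_scalar hp, Matrix.scalar_apply, Matrix.det_diagonal, Finset.prod_const,
    Finset.card_univ]

/-- The determinant of right multiplication. -/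
def detHom (H : IsRightMulMatrix φ b ρ) : R →* A where
  toFun g := (ρ g).det
  map_one' := by
    have h := H.det_scalar (p := 1) fun i ↦ by rw [map_one]; exact .one_left _
    rwa [map_one, one_pow] at h
  map_mul' g h := by rw [H.map_mul, Matrix.det_mul]

theorem map_detHom_eq_self (H : IsRightMulMatrix φ b ρ) {τ : A →+* A} {t : R}
    (hτ : ∀ p, t * φ p = φ (τ p) * t) (ht : ∀ i, Commute t (b i))
    (hreg : IsRightRegular (H.detHom t)) (g : R) : τ (H.detHom g) = H.detHom g := by
  apply hreg
  calc τ (ρ g).det * (ρ t).det = (ρ (t * g)).det := by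
        rw [H.map_mul_of_semicommute hτ ht, Matrix.det_mul, RingHom.map_det,
          RingHom.mapMatrix_apply]
    _ = (ρ g).det * (ρ t).det := by rw [H.map_mul, Matrix.det_mul, mul_comm]

/-- The adjugate identity `adj (ρ g) * ρ g = det (ρ g) • 1`, read off in the row of `b i₀ = 1`. -/
theorem map_detHom_mem_span (H : IsRightMulMatrix φ b ρ) {i₀ : ι} (hi₀ : b i₀ = 1) (g : R) :
    φ (H.detHom g) ∈ Ideal.span {g} := by
  refine Ideal.mem_span_singleton'.mpr ⟨∑ i, φ ((ρ g).adjugate i₀ i) * b i, ?_⟩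
  rw [H.sum_mul_vecMul, ← Matrix.mul_apply_eq_vecMul, Matrix.adjugate_mul]
  simp only [Matrix.smul_apply, Matrix.one_apply, smul_eq_mul, mul_ite, mul_one, mul_zero,
    apply_ite φ, map_zero, ite_mul, zero_mul, Finset.sum_ite_eq, Finset.mem_univ, if_true, hi₀]
  rfl

end IsRightMulMatrix

theorem coeff_expand_mul_X_pow_fin {K : Type*} [CommSemiring K] {n : ℕ} (p : K[X]) (i j : Fin n)
    (k : ℕ) : (expand K n p * X ^ (j : ℕ)).coeff (n * k + i) = if j = i then p.coeff k else 0 := by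
  have hn : 0 < n := i.pos
  split_ifs with hji
  · rw [hji, coeff_mul_X_pow, coeff_expand_mul' hn]
  rw [coeff_mul_X_pow']
  split_ifs with hle
  · refine (coeff_expand hn _ _).trans (if_neg fun hdvd ↦ hji (Fin.ext ?_))
    have hmod : (j : ℕ) ≡ i [MOD n] :=
      ((Nat.modEq_iff_dvd' hle).mpr hdvd).trans (by simp [Nat.ModEq])
    exact hmod.eq_of_lt_of_lt j.isLt i.isLt
  · rfl

/-- `R` is the skew polynomial ring `K[t;σ]`, with scalars embedded by `ι`; `P x` is the ordinary
polynomial with the same coefficients as `x`, the scalars being written on the left of the powers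
of `t`. -/
structure IsSkewPolynomialRing {K R : Type*} [Semiring K] [Semiring R] (σ : K →+* K)
    (ι : K →+* R) (t : R) (P : R →+ K[X]) : Prop where
  mul_scalar : ∀ a, t * ι a = ι (σ a) * t
  coeffs_monomial : ∀ a i, P (ι a * t ^ i) = monomial i a
  sum_coeffs : ∀ x, (P x).sum (fun i a ↦ ι a * t ^ i) = x

namespace IsSkewPolynomialRing

section Semiring

variable {K R : Type*} [Semiring K] [Semiring R] {σ : K →+* K} {ι : K →+* R} {t : R}
  {P : R →+ K[X]}

theorem coeffs_injective (S : IsSkewPolynomialRing σ ι t P) : Function.Injective P :=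
  Function.LeftInverse.injective (g := fun p : K[X] ↦ p.sum fun i a ↦ ι a * t ^ i) S.sum_coeffs

theorem coeffs_scalar (S : IsSkewPolynomialRing σ ι t P) (a : K) : P (ι a) = C a := by
  simpa using S.coeffs_monomial a 0

theorem coeffs_one (S : IsSkewPolynomialRing σ ι t P) : P 1 = 1 := by
  simpa using S.coeffs_scalar 1

theorem induction_on (S : IsSkewPolynomialRing σ ι t P) {motive : R → Prop} (x : R)
    (zero : motive 0) (add : ∀ x y, motive x → motive y → motive (x + y))
    (monomial : ∀ a i, motive (ι a * t ^ i)) : motive x := by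
  rw [← S.sum_coeffs x]
  exact Finset.sum_induction _ motive add zero fun i _ ↦ monomial _ i

theorem pow_mul_scalar (S : IsSkewPolynomialRing σ ι t P) (i : ℕ) (a : K) :
    t ^ i * ι a = ι ((σ ^ i) a) * t ^ i := by
  induction i with
  | zero => simp
  | succ i ih =>
    rw [pow_succ', mul_assoc, ih, ← mul_assoc, S.mul_scalar, mul_assoc, pow_succ' σ]
    rfl

theorem coeffs_monomial_mul (S : IsSkewPolynomialRing σ ι t P) (a : K) (i : ℕ) (h : R) :
    P (ι a * t ^ i * h) = monomial i a * (P h).map (σ ^ i) := by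
  induction h using S.induction_on with
  | zero => simp
  | add x y hx hy => rw [mul_add, map_add, hx, hy, map_add, Polynomial.map_add, mul_add]
  | monomial b j =>
    have hmul : ι a * t ^ i * (ι b * t ^ j) = ι (a * (σ ^ i) b) * t ^ (i + j) := by
      rw [map_mul, pow_add, mul_assoc, ← mul_assoc (t ^ i), S.pow_mul_scalar]
      simp only [mul_assoc]
    rw [hmul, S.coeffs_monomial, S.coeffs_monomial, map_monomial, monomial_mul_monomial]

theorem coeff_coeffs_mul (S : IsSkewPolynomialRing σ ι t P) (g h : R) (k : ℕ) :
    (P (g * h)).coeff k =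
      ∑ x ∈ Finset.HasAntidiagonal.antidiagonal k,
        (P g).coeff x.1 * (σ ^ x.1) ((P h).coeff x.2) := by
  induction g using S.induction_on with
  | zero => simp
  | add x y hx hy =>
    simp only [add_mul, map_add, coeff_add, hx, hy, Finset.sum_add_distrib]
  | monomial a i =>
    rw [S.coeffs_monomial_mul, S.coeffs_monomial, coeff_mul]
    refine Finset.sum_congr rfl fun x _ ↦ ?_
    rw [coeff_monomial, coeff_map]
    split_ifs with hix
    · rw [hix]
    · rw [zero_mul, zero_mul]

theorem natDegree_coeffs_mul_le (S : IsSkewPolynomialRing σ ι t P) (g h : R) :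
    (P (g * h)).natDegree ≤ (P g).natDegree + (P h).natDegree := by
  refine natDegree_le_iff_coeff_eq_zero.mpr fun k hk ↦ ?_
  rw [S.coeff_coeffs_mul]
  refine Finset.sum_eq_zero fun x hx ↦ ?_
  rw [Finset.HasAntidiagonal.mem_antidiagonal] at hx
  obtain hlt | hlt : (P g).natDegree < x.1 ∨ (P h).natDegree < x.2 := by omega
  · rw [coeff_eq_zero_of_natDegree_lt hlt, zero_mul]
  · rw [coeff_eq_zero_of_natDegree_lt hlt, map_zero, mul_zero]

theorem coeff_coeffs_mul_add_natDegree (S : IsSkewPolynomialRing σ ι t P) (g h : R) :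
    (P (g * h)).coeff ((P g).natDegree + (P h).natDegree) =
      (P g).leadingCoeff * (σ ^ (P g).natDegree) (P h).leadingCoeff := by
  rw [S.coeff_coeffs_mul]
  refine Finset.sum_eq_single_of_mem ((P g).natDegree, (P h).natDegree)
    (Finset.HasAntidiagonal.mem_antidiagonal.mpr rfl) fun x hx hne ↦ ?_
  rw [Finset.HasAntidiagonal.mem_antidiagonal] at hx
  obtain hlt | hlt : (P g).natDegree < x.1 ∨ (P h).natDegree < x.2 := by
    rw [Ne, Prod.ext_iff] at hne
    simp only at hne
    omega
  · rw [coeff_eq_zero_of_natDegree_lt hlt, zero_mul]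
  · rw [coeff_eq_zero_of_natDegree_lt hlt, map_zero, mul_zero]

theorem monic_coeffs_mul (S : IsSkewPolynomialRing σ ι t P) {g h : R} (hg : (P g).Monic)
    (hh : (P h).Monic) : (P (g * h)).Monic :=
  monic_of_natDegree_le_of_coeff_eq_one _ (S.natDegree_coeffs_mul_le g h) <| by
    rw [S.coeff_coeffs_mul_add_natDegree, hg.leadingCoeff, hh.leadingCoeff, map_one, mul_one]

/-- The monic skew polynomials. -/
def monicSubmonoid (S : IsSkewPolynomialRing σ ι t P) : Submonoid R where
  carrier := {g | (P g).Monic}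
  one_mem' := by rw [Set.mem_ofPred_eq, S.coeffs_one]; exact monic_one
  mul_mem' := S.monic_coeffs_mul

end Semiring

section DivisionRing

variable {K R : Type*} [DivisionRing K] [Ring R] {σ : K →+* K} {ι : K →+* R} {t : R}
  {P : R →+ K[X]}

theorem leadingCoeff_mul_pow_ne_zero (S : IsSkewPolynomialRing σ ι t P) {g h : R} (hg : g ≠ 0)
    (hh : h ≠ 0) : (P g).leadingCoeff * (σ ^ (P g).natDegree) (P h).leadingCoeff ≠ 0 :=
  mul_ne_zero
    (leadingCoeff_ne_zero.mpr ((map_ne_zero_iff P S.coeffs_injective).mpr hg))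
    ((_root_.map_ne_zero (σ ^ (P g).natDegree)).mpr
      (leadingCoeff_ne_zero.mpr ((map_ne_zero_iff P S.coeffs_injective).mpr hh)))

theorem natDegree_coeffs_mul (S : IsSkewPolynomialRing σ ι t P) {g h : R} (hg : g ≠ 0)
    (hh : h ≠ 0) : (P (g * h)).natDegree = (P g).natDegree + (P h).natDegree :=
  natDegree_eq_of_le_of_coeff_ne_zero (S.natDegree_coeffs_mul_le g h) <| by
    rw [S.coeff_coeffs_mul_add_natDegree]
    exact S.leadingCoeff_mul_pow_ne_zero hg hh

theorem leadingCoeff_coeffs_mul (S : IsSkewPolynomialRing σ ι t P) {g h : R} (hg : g ≠ 0)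
    (hh : h ≠ 0) : (P (g * h)).leadingCoeff =
      (P g).leadingCoeff * (σ ^ (P g).natDegree) (P h).leadingCoeff := by
  rw [leadingCoeff, S.natDegree_coeffs_mul hg hh, S.coeff_coeffs_mul_add_natDegree]

theorem isDomain (S : IsSkewPolynomialRing σ ι t P) : IsDomain R := by
  have : Nontrivial R := ⟨1, 0, fun h ↦ one_ne_zero (α := K[X]) (by
    rw [← S.coeffs_one, h, map_zero])⟩
  have : NoZeroDivisors R := ⟨fun {g h} hgh ↦ by
    by_contra! hne
    have htop := S.coeff_coeffs_mul_add_natDegree g h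
    rw [hgh, map_zero, coeff_zero] at htop
    exact S.leadingCoeff_mul_pow_ne_zero hne.1 hne.2 htop.symm⟩
  exact NoZeroDivisors.to_isDomain R

theorem exists_degree_sub_mul_lt (S : IsSkewPolynomialRing σ ι t P) {b g : R} (hb : b ≠ 0)
    (hg : g ≠ 0) (hbg : (P b).degree ≤ (P g).degree) :
    ∃ q, (P (g - q * b)).degree < (P g).degree := by
  have hPb : P b ≠ 0 := (map_ne_zero_iff P S.coeffs_injective).mpr hb
  have hPg : P g ≠ 0 := (map_ne_zero_iff P S.coeffs_injective).mpr hg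
  set k := (P g).natDegree - (P b).natDegree with hk
  set β := (σ ^ k) (P b).leadingCoeff with hβ
  have hβ0 : β ≠ 0 := (_root_.map_ne_zero _).mpr (leadingCoeff_ne_zero.mpr hPb)
  set a := (P g).leadingCoeff * β⁻¹ with ha
  have ha0 : a ≠ 0 := mul_ne_zero (leadingCoeff_ne_zero.mpr hPg) (inv_ne_zero hβ0)
  set q := ι a * t ^ k
  have hPq : P q = monomial k a := S.coeffs_monomial a k
  have hq0 : q ≠ 0 := by
    rw [← map_ne_zero_iff P S.coeffs_injective, hPq]
    exact (monomial_eq_zero_iff _ _).not.mpr ha0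
  have hlead : (P g).leadingCoeff = (P (q * b)).leadingCoeff := by
    rw [S.leadingCoeff_coeffs_mul hq0 hb, hPq, natDegree_monomial_eq k ha0, leadingCoeff_monomial,
      ← hβ, ha, inv_mul_cancel_right₀ hβ0]
  have hdeg : (P g).degree = (P (q * b)).degree := by
    have hPqb : P (q * b) ≠ 0 := leadingCoeff_ne_zero.mp (hlead ▸ leadingCoeff_ne_zero.mpr hPg)
    rw [degree_eq_natDegree hPg, degree_eq_natDegree hPqb, S.natDegree_coeffs_mul hq0 hb, hPq,
      natDegree_monomial_eq k ha0, hk, Nat.sub_add_cancel (natDegree_le_natDegree hbg)]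
  exact ⟨q, by rw [map_sub]; exact degree_sub_lt_left hdeg hPg hlead⟩

theorem exists_mul_add_degree_lt (S : IsSkewPolynomialRing σ ι t P) {b : R} (hb : b ≠ 0) (g : R) :
    ∃ q r, q * b + r = g ∧ (P r).degree < (P b).degree := by
  induction hd : (P g).degree using WellFoundedLT.induction generalizing g with
  | ind d ih =>
    subst hd
    rcases lt_or_ge (P g).degree (P b).degree with hlt | hle
    · exact ⟨0, g, by rw [zero_mul, zero_add], hlt⟩
    have hg : g ≠ 0 := by
      rintro rfl
      rw [map_zero, degree_zero, le_bot_iff, degree_eq_bot] at hle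
      exact hb ((map_eq_zero_iff P S.coeffs_injective).mp hle)
    obtain ⟨q, hq⟩ := S.exists_degree_sub_mul_lt hb hg hle
    obtain ⟨q', r, hqr, hr⟩ := ih _ hq (g - q * b) rfl
    exact ⟨q' + q, r, by rw [add_mul, add_right_comm, hqr, sub_add_cancel], hr⟩

theorem isPrincipalIdealRing (S : IsSkewPolynomialRing σ ι t P) : IsPrincipalIdealRing R := by
  refine ⟨fun I ↦ ?_⟩
  by_cases hI : I = ⊥
  · exact hI ▸ bot_isPrincipal
  obtain ⟨x, hxI, hx0⟩ := Submodule.exists_mem_ne_zero_of_ne_bot hI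
  obtain ⟨b, ⟨hbI, hb0⟩, hmin⟩ := exists_minimalFor_of_wellFoundedLT
    (fun y ↦ y ∈ I ∧ y ≠ 0) (fun y ↦ (P y).degree) ⟨x, hxI, hx0⟩
  refine ⟨b, le_antisymm (fun g hgI ↦ ?_) ((Ideal.span_singleton_le_iff_mem I).mpr hbI)⟩
  obtain ⟨q, r, hqr, hr⟩ := S.exists_mul_add_degree_lt hb0 g
  have hrI : r ∈ I := (Ideal.add_mem_iff_right I (I.mul_mem_left q hbI)).mp (hqr ▸ hgI)
  have hr0 : r = 0 := by
    by_contra hne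
    exact (hmin ⟨hrI, hne⟩ hr.le).not_gt hr
  exact Ideal.mem_span_singleton'.mpr ⟨q, by rw [← hqr, hr0, add_zero]⟩

theorem natDegree_coeffs_of_isUnit (S : IsSkewPolynomialRing σ ι t P) {u : R} (hu : IsUnit u) :
    (P u).natDegree = 0 := by
  have := S.isDomain
  obtain ⟨v, huv⟩ := hu.exists_right_inv
  have hdeg := S.natDegree_coeffs_mul hu.ne_zero
    (right_ne_zero_of_mul (huv ▸ one_ne_zero : u * v ≠ 0))
  rw [huv, S.coeffs_one, natDegree_one] at hdeg
  omega

theorem leadingCoeff_coeffs_units_mul (S : IsSkewPolynomialRing σ ι t P) (u : Rˣ) {r : R}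
    (hr : r ≠ 0) : (P (u * r)).leadingCoeff = (P u).leadingCoeff * (P r).leadingCoeff := by
  have := S.isDomain
  rw [S.leadingCoeff_coeffs_mul u.ne_zero hr, S.natDegree_coeffs_of_isUnit u.isUnit, pow_zero,
    RingHom.one_def, RingHom.id_apply]

theorem isMonicSubmonoid (S : IsSkewPolynomialRing σ ι t P) :
    IsMonicSubmonoid S.monicSubmonoid where
  zero_notMem h := not_monic_zero (map_zero P ▸ show (P 0).Monic from h)
  existsUnique_units_mul_mem r hr := by
    have hlead : (P r).leadingCoeff ≠ 0 :=
      leadingCoeff_ne_zero.mpr ((map_ne_zero_iff P S.coeffs_injective).mpr hr)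
    have hmonic (u : Rˣ) : ↑u * r ∈ S.monicSubmonoid ↔
        (P u).leadingCoeff = (P r).leadingCoeff⁻¹ := by
      rw [← mul_eq_one_iff_eq_inv₀ hlead, ← S.leadingCoeff_coeffs_units_mul u hr]
      rfl
    obtain ⟨u, hu⟩ : IsUnit (ι (P r).leadingCoeff⁻¹) := (IsUnit.mk0 _ (inv_ne_zero hlead)).map ι
    refine ⟨u, (hmonic u).mpr (by rw [hu, S.coeffs_scalar, leadingCoeff_C]), fun v hv ↦ ?_⟩
    have hPv : P v = C (P r).leadingCoeff⁻¹ := by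
      rw [← (hmonic v).mp hv, leadingCoeff, S.natDegree_coeffs_of_isUnit v.isUnit]
      exact eq_C_of_natDegree_eq_zero (S.natDegree_coeffs_of_isUnit v.isUnit)
    exact Units.ext (S.coeffs_injective (by rw [hPv, hu, S.coeffs_scalar]))

end DivisionRing

section CommRing

variable {K R : Type*} [CommRing K] [Ring R] {σ : K →+* K} {ι : K →+* R} {t : R}
  {P : R →+ K[X]} {n : ℕ}

/-- The ring homomorphism `K[x] → K[t;σ]` with `x ↦ t ^ n`, for `σ` of order dividing `n`. -/
def expandHom (S : IsSkewPolynomialRing σ ι t P) (hσ : σ ^ n = 1) : K[X] →+* R :=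
  eval₂RingHom' ι (t ^ n) fun a ↦ by
    rw [commute_iff_eq, S.pow_mul_scalar, hσ, RingHom.one_def, RingHom.id_apply]

theorem expandHom_apply (S : IsSkewPolynomialRing σ ι t P) (hσ : σ ^ n = 1) (p : K[X]) :
    S.expandHom hσ p = p.sum fun k a ↦ ι a * t ^ (n * k) := by
  simp only [pow_mul]
  exact eval₂_eq_sum

theorem expandHom_monomial (S : IsSkewPolynomialRing σ ι t P) (hσ : σ ^ n = 1) (k : ℕ) (a : K) :
    S.expandHom hσ (monomial k a) = ι a * t ^ (n * k) := by
  rw [S.expandHom_apply, sum_monomial_index _ _ (by simp)]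

theorem coeffs_expandHom_mul_pow (S : IsSkewPolynomialRing σ ι t P) (hσ : σ ^ n = 1) (p : K[X])
    (i : ℕ) : P (S.expandHom hσ p * t ^ i) = expand K n p * X ^ i := by
  induction p using Polynomial.induction_on' with
  | add p q hp hq => simp only [map_add, add_mul, hp, hq]
  | monomial k a =>
    rw [S.expandHom_monomial, mul_assoc, ← pow_add, S.coeffs_monomial, expand_monomial,
      monomial_mul_X_pow, mul_comm n k]

theorem expandHom_basis_injective (S : IsSkewPolynomialRing σ ι t P) (hσ : σ ^ n = 1) :
    Function.Injective fun x : Fin n → K[X] ↦ ∑ j, S.expandHom hσ (x j) * t ^ (j : ℕ) := by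
  intro x y hxy
  funext i
  ext k
  have hcoeff (z : Fin n → K[X]) :
      (P (∑ j, S.expandHom hσ (z j) * t ^ (j : ℕ))).coeff (n * k + i) = (z i).coeff k := by
    simp only [map_sum, finsetSum_coeff, S.coeffs_expandHom_mul_pow, coeff_expand_mul_X_pow_fin,
      Finset.sum_ite_eq', Finset.mem_univ, if_true]
  rw [← hcoeff x, ← hcoeff y]
  exact congrArg (fun g ↦ (P g).coeff (n * k + i)) hxy

theorem isRightMulMatrix (S : IsSkewPolynomialRing σ ι t P) (hσ : σ ^ n = 1)
    {ρ : R → Matrix (Fin n) (Fin n) K[X]}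
    (hρ : ∀ (g : R) (i : Fin n), t ^ (i : ℕ) * g =
      ∑ j : Fin n, ((ρ g i j).sum fun k a ↦ ι a * t ^ (n * k)) * t ^ (j : ℕ)) :
    IsRightMulMatrix (S.expandHom hσ) (fun i : Fin n ↦ t ^ (i : ℕ)) ρ where
  basis_mul g i := by simp only [S.expandHom_apply, hρ]
  injective := S.expandHom_basis_injective hσ

theorem mul_expandHom (S : IsSkewPolynomialRing σ ι t P) (hσ : σ ^ n = 1) (p : K[X]) :
    t * S.expandHom hσ p = S.expandHom hσ (p.map σ) * t := by
  induction p using Polynomial.induction_on' with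
  | add p q hp hq => rw [map_add, mul_add, hp, hq, ← add_mul, ← map_add, ← Polynomial.map_add]
  | monomial k a =>
    rw [map_monomial, S.expandHom_monomial, S.expandHom_monomial, ← mul_assoc, S.mul_scalar,
      mul_assoc, mul_assoc, ← pow_succ, ← pow_succ']

theorem commute_expandHom (S : IsSkewPolynomialRing σ ι t P) (hσ : σ ^ n = 1) {p : K[X]}
    (hp : p.map σ = p) (r : R) : Commute (S.expandHom hσ p) r := by
  have ht : Commute (S.expandHom hσ p) t := by
    rw [commute_iff_eq, S.mul_expandHom, hp]
  have hι (a : K) : Commute (S.expandHom hσ p) (ι a) := by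
    have hC : ι a = S.expandHom hσ (C a) := by
      rw [← monomial_zero_left, S.expandHom_monomial, mul_zero, pow_zero, mul_one]
    exact hC ▸ (Commute.all p (C a)).map (S.expandHom hσ)
  induction r using S.induction_on with
  | zero => exact .zero_right _
  | add x y hx hy => exact hx.add_right hy
  | monomial a i => exact (hι a).mul_right (ht.pow_right i)

theorem isRegular_detHom [IsDomain K] (S : IsSkewPolynomialRing σ ι t P) (hσ : σ ^ n = 1)
    (hn : n ≠ 0) {ρ : R → Matrix (Fin n) (Fin n) K[X]}
    (H : IsRightMulMatrix (S.expandHom hσ) (fun i : Fin n ↦ t ^ (i : ℕ)) ρ) :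
    IsRegular (H.detHom t) := by
  have hX : S.expandHom hσ X = t ^ n := by
    rw [← monomial_one_one_eq_X, S.expandHom_monomial, map_one, one_mul, mul_one]
  have hdet : H.detHom t ^ n = X ^ n := by
    rw [← map_pow, ← hX]
    exact (H.det_scalar fun i ↦ S.commute_expandHom hσ (map_X σ) _).trans
      (by rw [Fintype.card_fin])
  refine .of_ne_zero fun h0 ↦ pow_ne_zero n (X_ne_zero (R := K)) ?_
  rw [← hdet, h0, zero_pow hn]

theorem map_detHom [IsDomain K] (S : IsSkewPolynomialRing σ ι t P) (hσ : σ ^ n = 1)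
    (hn : n ≠ 0) {ρ : R → Matrix (Fin n) (Fin n) K[X]}
    (H : IsRightMulMatrix (S.expandHom hσ) (fun i : Fin n ↦ t ^ (i : ℕ)) ρ) (g : R) :
    (H.detHom g).map σ = H.detHom g :=
  H.map_detHom_eq_self (τ := mapRingHom σ) (S.mul_expandHom hσ)
    (fun i ↦ (Commute.refl t).pow_right i) (S.isRegular_detHom hσ hn H).right g

theorem exists_isReducedNorm [IsDomain K] {F : Type*} [CommRing F] [Algebra F K]
    [FaithfulSMul F K] (S : IsSkewPolynomialRing σ ι t P) (hσ : σ ^ n = 1) (hn : n ≠ 0)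
    (hfix : ∀ a, σ a = a ↔ a ∈ Set.range (algebraMap F K))
    {ρ : R → Matrix (Fin n) (Fin n) K[X]}
    (hρ : ∀ (g : R) (i : Fin n), t ^ (i : ℕ) * g =
      ∑ j : Fin n, ((ρ g i j).sum fun k a ↦ ι a * t ^ (n * k)) * t ^ (j : ℕ)) :
    ∃ M : R →* F[X], (∀ g, (M g).map (algebraMap F K) = (ρ g).det) ∧
      IsReducedNorm M ((S.expandHom hσ).comp (mapRingHom (algebraMap F K))) n := by
  have H := S.isRightMulMatrix hσ hρ
  have hinj : Function.Injective (mapRingHom (algebraMap F K)) :=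
    map_injective _ (FaithfulSMul.algebraMap_injective F K)
  have hcomm (p : F[X]) (r : R) : Commute (S.expandHom hσ (p.map (algebraMap F K))) r := by
    refine S.commute_expandHom hσ ?_ r
    ext k
    rw [coeff_map, coeff_map, (hfix _).mpr ⟨_, rfl⟩]
  have hlift (g : R) : ∃ p : F[X], mapRingHom (algebraMap F K) p = H.detHom g := by
    rw [coe_mapRingHom, ← mem_lifts, lifts_iff_coeff_lifts]
    intro k
    rw [← hfix, ← coeff_map, S.map_detHom hσ hn H]
  choose M hM using hlift
  refine ⟨{ toFun := M, map_one' := hinj ?_, map_mul' := fun g h ↦ hinj ?_ }, hM, hcomm,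
    fun p ↦ hinj ?_, fun g ↦ ?_⟩
  · rw [hM, map_one, map_one]
  · rw [hM, map_mul, map_mul, hM, hM]
  · rw [map_pow]
    exact (hM _).trans ((H.det_scalar fun i ↦ hcomm p _).trans (by rw [Fintype.card_fin]; rfl))
  · have hmem := H.map_detHom_mem_span (i₀ := ⟨0, Nat.pos_of_ne_zero hn⟩) (pow_zero t) g
    rwa [← hM] at hmem

end CommRing

end IsSkewPolynomialRing

/-- The map sending `g` to the ordinary polynomial with coefficients `coeff g`, so that degrees and
leading coefficients of skew polynomials are those of `K[X]`. -/
noncomputable def coeffPolynomial {K R : Type*} [Semiring K] [AddCommMonoid R]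
    (coeff : R →+ (ℕ →₀ K)) : R →+ K[X] where
  toFun g := ⟨⟨coeff g⟩⟩
  map_zero' := by rw [map_zero]; rfl
  map_add' g h := by rw [map_add]; rfl

theorem coeff_coeffPolynomial {K R : Type*} [Semiring K] [AddCommMonoid R] (coeff : R →+ (ℕ →₀ K))
    (g : R) (i : ℕ) : (coeffPolynomial coeff g).coeff i = coeff g i := rfl

theorem natDegree_eq_sup_support {K : Type*} [Semiring K] (p : K[X]) :
    p.natDegree = p.support.sup id := by
  refine le_antisymm ?_ (Finset.sup_le le_natDegree_of_mem_supp)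
  rcases eq_or_ne p 0 with rfl | hp
  · simp
  · exact Finset.le_sup (f := id) (natDegree_mem_support_of_nonzero hp)

theorem monic_coeffPolynomial_iff {K R : Type*} [Semiring K] [AddCommMonoid R]
    (coeff : R →+ (ℕ →₀ K)) (g : R) :
    (coeffPolynomial coeff g).Monic ↔ coeff g ((coeff g).support.sup id) = 1 := by
  rw [Monic, leadingCoeff, natDegree_eq_sup_support]
  rfl

theorem monic_coeffPolynomial_of_coeff_eq_one {K R : Type*} [Semiring K] [AddCommMonoid R]
    {coeff : R →+ (ℕ →₀ K)} {g : R} {m : ℕ} (hm : coeff g m = 1)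
    (hlt : ∀ i, m < i → coeff g i = 0) : (coeffPolynomial coeff g).Monic :=
  monic_of_natDegree_le_of_coeff_eq_one m (natDegree_le_iff_coeff_eq_zero.mpr fun i ↦ hlt i) hm

theorem isSkewPolynomialRing_coeffPolynomial {K R : Type*} [Semiring K] [Semiring R] {σ : K →+* K}
    {ι : K →+* R} {t : R} {coeff : R →+ (ℕ →₀ K)} (hmul : ∀ a, t * ι a = ι (σ a) * t)
    (hcoeff : ∀ a i, coeff (ι a * t ^ i) = Finsupp.single i a)
    (hrepr : ∀ x, (coeff x).sum (fun i a ↦ ι a * t ^ i) = x) :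
    IsSkewPolynomialRing σ ι t (coeffPolynomial coeff) where
  mul_scalar := hmul
  coeffs_monomial a i := by
    ext k
    rw [coeff_coeffPolynomial, hcoeff, coeff_monomial, Finsupp.single_apply]
  sum_coeffs := hrepr

section Galois

variable {F K : Type*} [Field F] [Field K] [Algebra F K] [FiniteDimensional F K] [IsGalois F K]

theorem ringHom_pow_finrank_eq_one (σ : K ≃ₐ[F] K) :
    (σ : K →+* K) ^ Module.finrank F K = 1 := by
  have hσ : σ ^ Module.finrank F K = 1 := by
    rw [← IsGalois.card_aut_eq_finrank F K]
    exact pow_card_eq_one'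
  have hiter : σ^[Module.finrank F K] = id := by
    rw [← AlgEquiv.coe_pow, hσ]
    rfl
  exact DFunLike.coe_injective ((RingHom.coe_pow (σ : K →+* K) _).trans hiter)

theorem fixed_by_generator_iff_mem_range_algebraMap {σ : K ≃ₐ[F] K}
    (hσ : ∀ τ : K ≃ₐ[F] K, τ ∈ Subgroup.zpowers σ) (a : K) :
    σ a = a ↔ a ∈ Set.range (algebraMap F K) := by
  rw [IsGalois.mem_range_algebraMap_iff_fixed]
  refine ⟨fun ha τ ↦ ?_, fun ha ↦ ha σ⟩
  have hle : Subgroup.zpowers σ ≤ MulAction.stabilizer (K ≃ₐ[F] K) a :=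
    Subgroup.zpowers_le.mpr ha
  exact hle (hσ τ)

end Galois

theorem count_of_factorizations_general {F K R : Type*} [Field F] [Field K] [Algebra F K] [Ring R]
    {n : ℕ} (hn : n ≠ 0) {σ : K →+* K} (hσ : σ ^ n = 1)
    (hfix : ∀ a, σ a = a ↔ a ∈ Set.range (algebraMap F K)) {ι : K →+* R} {t : R} {P : R →+ K[X]}
    (S : IsSkewPolynomialRing σ ι t P) {ρ : R → Matrix (Fin n) (Fin n) K[X]}
    (hρ : ∀ (g : R) (i : Fin n), t ^ (i : ℕ) * g =
      ∑ j : Fin n, ((ρ g i j).sum fun k a ↦ ι a * t ^ (n * k)) * t ^ (j : ℕ))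
    {f : R} (hf : (P f).Monic) {l : ℕ} {hs : Fin l → F[X]} (hirr : ∀ i, Irreducible (hs i))
    (hdist : ∀ i j, i ≠ j → ¬ Associated (hs i) (hs j))
    (hNf : (ρ f).det = (List.ofFn hs).prod.map (algebraMap F K)) :
    Nat.card {gs : Fin l → R //
      f = (List.ofFn gs).prod ∧ ∀ i, Irreducible (gs i) ∧ (P (gs i)).Monic} = l.factorial := by
  have := S.isDomain
  have := S.isPrincipalIdealRing
  obtain ⟨M, hM, H⟩ := S.exists_isReducedNorm hσ hn hfix hρ
  have hMf : M f = ∏ i, hs i := by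
    rw [← List.prod_ofFn]
    exact map_injective _ (algebraMap F K).injective ((hM f).trans hNf)
  exact H.card_irreducible_factorizations S.isMonicSubmonoid hf hirr hdist (.of_eq hMf)

/-- If `N(f)` is a product of `l` pairwise non-associate irreducible polynomials
in `F[x]`, then `f` has exactly `l!` factorizations into irreducible monic
factors in `R = K[t;σ]`. -/
theorem count_of_factorizations
    (F K : Type) [Field F] [Field K] [Algebra F K] [IsGalois F K]
    (n : ℕ) (hn : 0 < n) (hdim : Module.finrank F K = n)
    (σ : K ≃ₐ[F] K) (hσgen : ∀ τ : K ≃ₐ[F] K, τ ∈ Subgroup.zpowers σ)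
    (R : Type) [Ring R] (ι : K →+* R) (t : R)
    (hmul : ∀ a : K, t * ι a = ι (σ a) * t)
    (coeff : R →+ (ℕ →₀ K))
    (hcoeff : ∀ (a : K) (i : ℕ), coeff (ι a * t ^ i) = Finsupp.single i a)
    (hrepr : ∀ x : R, (coeff x).sum (fun i a => ι a * t ^ i) = x)
    (ρ : R → Matrix (Fin n) (Fin n) (Polynomial K))
    (hρ : ∀ (g : R) (i : Fin n), t ^ (i : ℕ) * g =
      ∑ j : Fin n, ((ρ g i j).sum fun k a => ι a * t ^ (n * k)) * t ^ (j : ℕ))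
    (N : R → Polynomial K) (hN : ∀ g : R, N g = (ρ g).det)
    (f : R) (m : ℕ)
    (hdeg : coeff f m ≠ 0 ∧ ∀ i : ℕ, m < i → coeff f i = 0)
    (hfmonic : coeff f m = 1)
    (hgcrd : ∃ p q : R, p * f + q * t = 1)
    (hhat : Polynomial F) (hmonic : hhat.Monic)
    (hleft : ∃ g : R, (hhat.sum fun k a => ι (algebraMap F K a) * t ^ (n * k)) = g * f)
    (hcentral : (hhat.sum fun k a => ι (algebraMap F K a) * t ^ (n * k)) ∈ Subring.center R)
    (hminimal : ∀ c : R, c ∈ Subring.center R → c ≠ 0 → (∃ g : R, c = g * f) →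
      (coeff (hhat.sum fun k a => ι (algebraMap F K a) * t ^ (n * k))).support.sup id ≤
        (coeff c).support.sup id)
    (hdeghat : hhat.natDegree = m)
    -- N(f) = ĥ₁⋯ĥ_l with the ĥ_i pairwise non-associate irreducibles in F[x]:
    (l : ℕ) (hs : Fin l → Polynomial F) (hirr : ∀ i, Irreducible (hs i))
    (hdist : ∀ i j, i ≠ j → ¬ Associated (hs i) (hs j))
    (hNf : N f = Polynomial.map (algebraMap F K) (List.ofFn hs).prod) :
    Nat.card {gs : Fin l → R //
      f = (List.ofFn gs).prod ∧
      ∀ i, Irreducible (gs i) ∧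
        (coeff (gs i)) ((coeff (gs i)).support.sup id) = 1} = Nat.factorial l := by
  have : FiniteDimensional F K := .of_finrank_pos (hdim ▸ hn)
  have hσ : (σ : K →+* K) ^ n = 1 := hdim ▸ ringHom_pow_finrank_eq_one σ
  have S : IsSkewPolynomialRing (σ : K →+* K) ι t (coeffPolynomial coeff) :=
    isSkewPolynomialRing_coeffPolynomial hmul hcoeff hrepr
  have hf : (coeffPolynomial coeff f).Monic :=
    monic_coeffPolynomial_of_coeff_eq_one hfmonic hdeg.2
  simp only [← monic_coeffPolynomial_iff]
  exact count_of_factorizations_general hn.ne' hσ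
    (fixed_by_generator_iff_mem_range_algebraMap hσgen) S hρ hf hirr hdist
    ((hN f).symm.trans hNf)
end

section
/- In the setting R = K[t;δ] with δ algebraic with minimum p-polynomial g of degree p^e and Const(δ) = F, every f ∈ R divides its reduced norm: N(f) ∈ F[x] (x = g(t)) and there is f^♯ ∈ R with N(f) = f·f^♯ = f^♯·f. Moreover if f = a₀ + a₁t + ⋯ + a_m t^m has degree m, then N(f) = (−1)^{m(p^e−1)} a_m^{p^e} x^m + (lower order terms in x); in particular deg_x N(f) = m and the leading coefficient of N(f) is (−1)^{m(p^e−1)} a_m^{p^e}. -/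
/-!
In characteristic `p`, `ad(t)^(p^k) = ad(t^(p^k))`, hence `x = g(t)` is central in `R = K[t;δ]` for
a monic `p`-polynomial `g` with constant coefficients that annihilates `δ`. As `x` is monic of
degree `n = p^e` in `t`, the powers `1, t, …, t^(n-1)` form a basis of `R` over `K[x]`.

The `i`-th row of `ρ(f)` consists of the coordinates of `t^i f`. Comparing the coordinates of
`t · t^i f` and `t^i f · t` gives `δ(ρ(f)) = [ρ(t), ρ(f)]`. Over the dual numbers,
`ρ(f) + ε δ(ρ(f))` is therefore the conjugate of `ρ(f)` by `1 + ε ρ(t)`, so that `δ(N(f)) = 0` and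
`N(f)` is central. The first row of the adjugate of `ρ(f)` gives the coordinates of an element `f♯`
with `f♯ f = N(f)`, and `f f♯ = N(f)` follows because `N(f)` is central and `R` has no zero
divisors.

For the leading term, substitute `x = y^n` and multiply column `j` of `ρ(f)` by `y^j`. Row `i` then
has degree at most `m + i`, and its coefficients of degree `m + i` vanish except for one `a_m` in
column `m + i` modulo `n`. The leading coefficient of the determinant is thus `a_m^n` times the sign
of the `m`-th power of an `n`-cycle.
-/

open Polynomial
open scoped Differential Matrix

section Determinant

variable {ι A : Type*} [Fintype ι] [DecidableEq ι] [CommRing A]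

/-- The ring homomorphism `a ↦ a + ε D(a)` to the dual numbers attached to a derivation `D`. -/
def dualNumberHom (D : Derivation ℤ A A) : A →+* DualNumber A where
  toFun a := TrivSqZeroExt.inl a + TrivSqZeroExt.inr (D a)
  map_one' := by ext <;> simp
  map_zero' := by ext <;> simp
  map_add' a b := by ext <;> simp
  map_mul' a b := by ext <;> simp [mul_comm]

theorem derivation_det_eq_zero_of_map_eq_commutator (D : Derivation ℤ A A) (M T : Matrix ι ι A)
    (h : M.map D = T * M - M * T) : D M.det = 0 := by
  let inl : A →+* DualNumber A := TrivSqZeroExt.inlHom A A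
  let ε : DualNumber A := DualNumber.eps
  have hε : ε * ε = 0 := DualNumber.eps_mul_eps
  have hinv : (1 + ε • T.map inl) * (1 - ε • T.map inl) = 1 := by
    simp only [add_mul, mul_sub, mul_one, one_mul, smul_mul_smul_comm, hε, zero_smul]
    abel
  have hexpand : (1 + ε • T.map inl) * M.map inl * (1 - ε • T.map inl) =
      M.map inl + ε • (T * M - M * T).map inl := by
    rw [Matrix.map_sub _ (map_sub inl), Matrix.map_mul, Matrix.map_mul]
    simp only [add_mul, mul_sub, mul_one, one_mul, smul_mul_assoc, mul_smul_comm, smul_smul, hε,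
      zero_smul, smul_sub, smul_add]
    abel
  have hconj : M.map (dualNumberHom D) =
      (1 + ε • T.map inl) * M.map inl * (1 - ε • T.map inl) := by
    rw [hexpand, ← h]
    ext i j <;> simp [dualNumberHom, inl, ε]
  have hdet : dualNumberHom D M.det = inl M.det := by
    rw [RingHom.map_det, RingHom.map_det, RingHom.mapMatrix_apply, RingHom.mapMatrix_apply, hconj,
      Matrix.det_mul, Matrix.det_mul, mul_right_comm, ← Matrix.det_mul, hinv, Matrix.det_one,
      one_mul]
  simpa [dualNumberHom, inl] using congrArg TrivSqZeroExt.snd hdet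

end Determinant

/-- The coefficient sequence `c` is that of `a T^d + (terms of lower degree)`. The coefficient `a`
is allowed to vanish, so that leading terms multiply and add without case distinctions. -/
def HasLeadingTerm {A : Type*} [Zero A] (c : ℕ → A) (d : ℕ) (a : A) : Prop :=
  c d = a ∧ ∀ i, d < i → c i = 0

namespace HasLeadingTerm

variable {A : Type*}

theorem exists_of_ne_zero [Zero A] {c : ℕ →₀ A} (hc : c ≠ 0) :
    ∃ d a, a ≠ 0 ∧ HasLeadingTerm c d a := by
  have hne : c.support.Nonempty := Finsupp.support_nonempty_iff.2 hc
  refine ⟨c.support.max' hne, _, Finsupp.mem_support_iff.1 (c.support.max'_mem hne), rfl,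
    fun i hi => ?_⟩
  by_contra hci
  exact hi.not_ge (c.support.le_max' i (Finsupp.mem_support_iff.2 hci))

theorem iff_natDegree_le [Semiring A] {q : A[X]} {d : ℕ} {a : A} :
    HasLeadingTerm q.coeff d a ↔ q.natDegree ≤ d ∧ q.coeff d = a := by
  rw [HasLeadingTerm, natDegree_le_iff_coeff_eq_zero, and_comm]

theorem natDegree_eq [Semiring A] {q : A[X]} {d : ℕ} {a : A} (h : HasLeadingTerm q.coeff d a)
    (ha : a ≠ 0) : q.natDegree = d :=
  le_antisymm (iff_natDegree_le.1 h).1 (le_natDegree_of_ne_zero (h.1.trans_ne ha))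

theorem mul [Semiring A] {q r : A[X]} {d d' : ℕ} {a b : A} (hq : HasLeadingTerm q.coeff d a)
    (hr : HasLeadingTerm r.coeff d' b) : HasLeadingTerm (q * r).coeff (d + d') (a * b) := by
  rw [iff_natDegree_le] at *
  exact ⟨natDegree_mul_le_of_le hq.1 hr.1,
    by rw [coeff_mul_add_eq_of_natDegree_le hq.1 hr.1, hq.2, hr.2]⟩

theorem prod [CommSemiring A] {ι : Type*} (s : Finset ι) {q : ι → A[X]} {d : ι → ℕ} {a : ι → A}
    (h : ∀ i ∈ s, HasLeadingTerm (q i).coeff (d i) (a i)) :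
    HasLeadingTerm (∏ i ∈ s, q i).coeff (∑ i ∈ s, d i) (∏ i ∈ s, a i) := by
  classical
  induction s using Finset.induction_on with
  | empty => simp [iff_natDegree_le]
  | insert i s hi ih =>
    rw [Finset.forall_mem_insert] at h
    rw [Finset.prod_insert hi, Finset.sum_insert hi, Finset.prod_insert hi]
    exact h.1.mul (ih h.2)

theorem det [CommRing A] {ι : Type*} [Fintype ι] [DecidableEq ι] {B : Matrix ι ι A[X]}
    {L : Matrix ι ι A} {d : ι → ℕ} (h : ∀ i j, HasLeadingTerm (B i j).coeff (d i) (L i j)) :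
    HasLeadingTerm B.det.coeff (∑ i, d i) L.det := by
  have hprod (σ : Equiv.Perm ι) :=
    prod Finset.univ (q := fun i => B i (σ i)) (a := fun i => L i (σ i)) fun i _ => h i (σ i)
  rw [← Matrix.det_transpose B, ← Matrix.det_transpose L]
  constructor
  · simp only [Matrix.det_apply, finsetSum_coeff, coeff_smul, Matrix.transpose_apply, (hprod _).1]
  · intro i hi
    simp only [Matrix.det_apply, finsetSum_coeff, coeff_smul, Matrix.transpose_apply,
      (hprod _).2 i hi, smul_zero, Finset.sum_const_zero]

end HasLeadingTerm

section Interleave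

variable {A : Type*} {n : ℕ}

/-- The polynomial in `y` obtained from `∑ v_j y^j` by substituting `x = y^n` in the `v_j ∈ A[x]`.
Its coefficient sequence interleaves those of the `v_j`. -/
noncomputable def interleave [CommSemiring A] (v : Fin n → A[X]) : A[X] :=
  ∑ j : Fin n, expand A n (v j) * X ^ (j : ℕ)

theorem coeff_expand_mul_X_pow [CommSemiring A] (q : A[X]) (j : Fin n) (l : ℕ) :
    (expand A n q * X ^ (j : ℕ)).coeff l = if l % n = j then q.coeff (l / n) else 0 := by
  have hn : 0 < n := j.pos
  have hl := Nat.mod_add_div l n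
  rw [coeff_mul_X_pow', coeff_expand hn]
  by_cases h : l % n = j
  · have hsub : l - j = n * (l / n) := by omega
    rw [if_pos (by omega), if_pos (hsub ▸ dvd_mul_right _ _), if_pos h, hsub,
      Nat.mul_div_cancel_left _ hn]
  · rw [if_neg h]
    split_ifs with hjl hdvd
    · have hmod : (j : ℕ) ≡ l [MOD n] := (Nat.modEq_iff_dvd' hjl).2 hdvd
      exact absurd (Eq.trans hmod.symm (Nat.mod_eq_of_lt j.2)) h
    · rfl
    · rfl

theorem coeff_interleave [CommSemiring A] (v : Fin n → A[X]) (j : Fin n) {l : ℕ}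
    (h : l % n = j) : (interleave v).coeff l = (v j).coeff (l / n) := by
  rw [interleave, finsetSum_coeff]
  simp only [coeff_expand_mul_X_pow, h, Fin.val_inj, Finset.sum_ite_eq, Finset.mem_univ, if_true]

theorem eq_zero_of_interleave_eq_zero [CommSemiring A] {v : Fin n → A[X]}
    (h : interleave v = 0) : v = 0 := by
  funext j
  ext k
  have hmod : (j + n * k) % n = j := by rw [Nat.add_mul_mod_self_left, Nat.mod_eq_of_lt j.2]
  have hdiv : (j + n * k) / n = k := by
    rw [Nat.add_mul_div_left _ _ j.pos, Nat.div_eq_of_lt j.2, zero_add]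
  simpa [h, hdiv] using (coeff_interleave v j hmod).symm

theorem val_finRotate_pow (m : ℕ) (i : Fin n) : ((finRotate n ^ m) i : ℕ) = (m + i) % n := by
  have : NeZero n := i.neZero
  induction m with
  | zero => simp [Nat.mod_eq_of_lt i.2]
  | succ m ih =>
    rw [pow_succ', Equiv.Perm.mul_apply, finRotate_apply, Fin.val_add, ih, Fin.coe_ofNat_eq_mod,
      ← Nat.add_mod, add_right_comm]

theorem HasLeadingTerm.det_of_interleave [CommRing A] [NeZero n] {M : Matrix (Fin n) (Fin n) A[X]}
    {m : ℕ} {a : A} (h : ∀ i, HasLeadingTerm (interleave (M i)).coeff (m + i) a) :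
    HasLeadingTerm M.det.coeff m ((-1) ^ (m * (n - 1)) * a ^ n) := by
  let B : Matrix (Fin n) (Fin n) A[X] := .of fun i j => X ^ (j : ℕ) * (M.map (expand A n)) i j
  let L : Matrix (Fin n) (Fin n) A := a • (finRotate n ^ m).permMatrix A
  have hB (i j : Fin n) : HasLeadingTerm (B i j).coeff (m + i) (L i j) := by
    have hcoeff (l : ℕ) :
        (B i j).coeff l = if l % n = j then (interleave (M i)).coeff l else 0 := by
      simp only [B, Matrix.of_apply, Matrix.map_apply, mul_comm (X ^ (j : ℕ)),
        coeff_expand_mul_X_pow]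
      exact ite_congr rfl (fun hl => (coeff_interleave _ j hl).symm) fun _ => rfl
    constructor
    · simp [hcoeff, (h i).1, L, PEquiv.toMatrix_apply, Fin.ext_iff, val_finRotate_pow, eq_comm]
    · intro l hl
      rw [hcoeff, (h i).2 l hl, ite_self]
  have hdetB : B.det = expand A n M.det * X ^ (∑ j : Fin n, (j : ℕ)) := by
    rw [Matrix.det_mul_row, Finset.prod_pow_eq_pow_sum, mul_comm, AlgHom.map_det,
      AlgHom.mapMatrix_apply]
  have hdetL : L.det = (-1) ^ (m * (n - 1)) * a ^ n := by
    rw [Matrix.det_smul, Matrix.det_permutation, map_pow, sign_finRotate, ← pow_mul,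
      mul_comm (n - 1), Fintype.card_fin, mul_comm]
    simp
  have hcoeff (k : ℕ) : M.det.coeff k = B.det.coeff (n * k + ∑ j : Fin n, (j : ℕ)) := by
    rw [hdetB, coeff_mul_X_pow, coeff_expand_mul' n.pos_of_neZero]
  have hdeg : ∑ i : Fin n, (m + (i : ℕ)) = n * m + ∑ i : Fin n, (i : ℕ) := by
    simp [Finset.sum_add_distrib]
  have hlead := HasLeadingTerm.det hB
  rw [hdeg, hdetL] at hlead
  refine ⟨(hcoeff m).trans hlead.1, fun k hk => (hcoeff k).trans (hlead.2 _ ?_)⟩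
  exact Nat.add_lt_add_right (Nat.mul_lt_mul_of_pos_left hk n.pos_of_neZero) _

end Interleave

theorem iterate_commutator_char_pow {R : Type*} [Ring R] (p : ℕ) [Fact p.Prime] [CharP R p]
    (k : ℕ) (x y : R) :
    (fun z => x * z - z * x)^[p ^ k] y = x ^ p ^ k * y - y * x ^ p ^ k := by
  have : CharP (Module.End ℤ R) p :=
    charP_of_injective_ringHom (f := (Algebra.lmul ℤ R).toRingHom) Algebra.lmul_injective p
  have hpow := sub_pow_char_pow_of_commute p k (LinearMap.commute_mulLeft_right (R := ℤ) x x)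
  have hiter : (fun z => x * z - z * x)^[p ^ k] y =
      ((LinearMap.mulLeft ℤ x - LinearMap.mulRight ℤ x) ^ p ^ k) y := by
    rw [Module.End.pow_apply]
    rfl
  rw [hiter, hpow, LinearMap.pow_mulLeft, LinearMap.pow_mulRight, LinearMap.sub_apply,
    LinearMap.mulLeft_apply, LinearMap.mulRight_apply]

/-- A presentation of `R` as the ring `K[t;δ]` of differential polynomials over `K`, where `δ` is
the derivation of `K`. The map `C` embeds the scalars, and `coeff` records the unique
expansion `∑ a_i t^i` of each element. -/
structure DifferentialPolynomialRing (K R : Type*) [CommRing K] [Differential K] [Ring R] where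
  C : K →+* R
  t : R
  coeff : R →+ ℕ →₀ K
  t_mul_C : ∀ a, t * C a = C a * t + C a′
  coeff_C_mul_t_pow : ∀ a i, coeff (C a * t ^ i) = Finsupp.single i a
  sum_coeff : ∀ y, ((coeff y).sum fun i a => C a * t ^ i) = y

namespace DifferentialPolynomialRing

variable {K R : Type*} [CommRing K] [Differential K] [Ring R] (S : DifferentialPolynomialRing K R)

theorem induction_on {P : R → Prop} (y : R) (add : ∀ y z, P y → P z → P (y + z))
    (monomial : ∀ a i, P (S.C a * S.t ^ i)) : P y := by
  rw [← S.sum_coeff y, Finsupp.sum]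
  exact Finset.sum_induction _ P add (by simpa using monomial 0 0) fun i _ => monomial _ i

theorem commute_of_commute_C_of_commute_t {z : R} (hC : ∀ a, Commute (S.C a) z)
    (ht : Commute S.t z) (y : R) : Commute y z := by
  induction y using S.induction_on with
  | add y y' hy hy' => exact hy.add_left hy'
  | monomial a i => exact (hC a).mul_left (ht.pow_left i)

theorem C_injective : Function.Injective S.C := by
  intro a b h
  have hcoeff := congrArg (fun y => S.coeff (y * S.t ^ 0)) h
  simp only [S.coeff_C_mul_t_pow] at hcoeff
  exact Finsupp.single_injective 0 hcoeff

theorem coeff_eq_zero_iff {y : R} : S.coeff y = 0 ↔ y = 0 :=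
  ⟨fun h => by rw [← S.sum_coeff y, h, Finsupp.sum_zero_index], fun h => by rw [h, map_zero]⟩

theorem coeff_t_pow (i : ℕ) : S.coeff (S.t ^ i) = Finsupp.single i 1 := by
  simpa using S.coeff_C_mul_t_pow 1 i

theorem coeff_C_mul (a : K) (y : R) (i : ℕ) : S.coeff (S.C a * y) i = a * S.coeff y i := by
  induction y using S.induction_on with
  | add y z hy hz => rw [mul_add, map_add, map_add, Finsupp.add_apply, Finsupp.add_apply, hy, hz,
      mul_add]
  | monomial b j => rw [← mul_assoc, ← map_mul, S.coeff_C_mul_t_pow, S.coeff_C_mul_t_pow,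
      Finsupp.single_apply, Finsupp.single_apply, mul_ite, mul_zero]

theorem coeff_t_mul_succ (y : R) (i : ℕ) :
    S.coeff (S.t * y) (i + 1) = S.coeff y i + (S.coeff y (i + 1))′ := by
  induction y using S.induction_on with
  | add y z hy hz =>
    simp only [mul_add, map_add, Finsupp.add_apply, hy, hz]
    abel
  | monomial a j =>
    rw [← mul_assoc, S.t_mul_C, add_mul, mul_assoc, ← pow_succ', map_add S.coeff,
      Finsupp.add_apply]
    simp only [S.coeff_C_mul_t_pow, Finsupp.single_apply, add_left_inj]
    split_ifs <;> simp only [map_zero]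

section LeadingTerm

theorem hasLeadingTerm_t_pow_mul {y : R} {d : ℕ} {a : K} (h : HasLeadingTerm (S.coeff y) d a)
    (k : ℕ) : HasLeadingTerm (S.coeff (S.t ^ k * y)) (d + k) a := by
  induction k with
  | zero => simpa using h
  | succ k ih =>
    rw [pow_succ', mul_assoc, ← add_assoc]
    constructor
    · rw [coeff_t_mul_succ, ih.1, ih.2 _ (Nat.lt_succ_self _), map_zero, add_zero]
    · intro i hi
      obtain ⟨i, rfl⟩ := Nat.exists_eq_succ_of_ne_zero (Nat.ne_zero_of_lt hi)
      rw [Nat.succ_eq_add_one, coeff_t_mul_succ, ih.2 i (by omega), ih.2 (i + 1) (by omega),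
        map_zero, add_zero]

theorem hasLeadingTerm_sum_C_mul {s : Finset ℕ} {c : ℕ → K} {b : ℕ → R} {d d' : ℕ} {a a' : K}
    (hs : ∀ l ∉ s, c l = 0) (hc : HasLeadingTerm c d a)
    (hb : ∀ l, HasLeadingTerm (S.coeff (b l)) (d' + l) a') :
    HasLeadingTerm (S.coeff (∑ l ∈ s, S.C (c l) * b l)) (d + d') (a * a') := by
  have hcoeff (i : ℕ) :
      S.coeff (∑ l ∈ s, S.C (c l) * b l) i = ∑ l ∈ s, c l * S.coeff (b l) i := by
    simp only [map_sum, Finsupp.finsetSum_apply, coeff_C_mul]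
  have hvanish {l i : ℕ} (h : l < d ∧ d + d' ≤ i ∨ d + d' < i ∨ d < l) :
      c l * S.coeff (b l) i = 0 := by
    by_cases hl : d < l
    · rw [hc.2 l hl, zero_mul]
    · rw [(hb l).2 i (by omega), mul_zero]
  constructor
  · rw [hcoeff, Finset.sum_eq_single d (fun l _ hl => hvanish (by omega))
      fun hd => by rw [hs d hd, zero_mul], hc.1, add_comm, (hb d).1]
  · intro i hi
    rw [hcoeff]
    exact Finset.sum_eq_zero fun l _ => hvanish (.inr (.inl hi))

theorem hasLeadingTerm_mul {y z : R} {d d' : ℕ} {a b : K} (hy : HasLeadingTerm (S.coeff y) d a)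
    (hz : HasLeadingTerm (S.coeff z) d' b) :
    HasLeadingTerm (S.coeff (y * z)) (d + d') (a * b) := by
  have hsum : y * z = ∑ l ∈ (S.coeff y).support, S.C (S.coeff y l) * (S.t ^ l * z) := by
    conv_lhs => rw [← S.sum_coeff y, Finsupp.sum, Finset.sum_mul]
    simp only [mul_assoc]
  rw [hsum]
  exact S.hasLeadingTerm_sum_C_mul (fun l hl => Finsupp.notMem_support_iff.1 hl) hy
    (S.hasLeadingTerm_t_pow_mul hz)

theorem hasLeadingTerm_one : HasLeadingTerm (S.coeff 1) 0 1 := by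
  rw [← pow_zero S.t, coeff_t_pow]
  exact ⟨Finsupp.single_eq_same, fun i hi => Finsupp.single_eq_of_ne hi.ne'⟩

theorem hasLeadingTerm_pow {x : R} {n : ℕ} (hx : HasLeadingTerm (S.coeff x) n 1) (k : ℕ) :
    HasLeadingTerm (S.coeff (x ^ k)) (n * k) 1 := by
  induction k with
  | zero => simpa using S.hasLeadingTerm_one
  | succ k ih => simpa only [pow_succ, Nat.mul_succ, mul_one] using S.hasLeadingTerm_mul ih hx

theorem noZeroDivisors (S : DifferentialPolynomialRing K R) [NoZeroDivisors K] :
    NoZeroDivisors R where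
  eq_zero_or_eq_zero_of_mul_eq_zero {y z} h := by
    by_contra! hyz
    obtain ⟨d, a, ha, hy⟩ :=
      HasLeadingTerm.exists_of_ne_zero (mt S.coeff_eq_zero_iff.1 hyz.1)
    obtain ⟨d', b, hb, hz⟩ :=
      HasLeadingTerm.exists_of_ne_zero (mt S.coeff_eq_zero_iff.1 hyz.2)
    refine mul_ne_zero ha hb ?_
    rw [← (S.hasLeadingTerm_mul hy hz).1, h, map_zero, Finsupp.zero_apply]

end LeadingTerm

section Coordinates

variable {n : ℕ}

/-- The left `K`-linear map `K[X] → R` with `X^l ↦ b_l`. -/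
noncomputable def combination (b : ℕ → R) : K[X] →+ R where
  toFun q := q.sum fun l a => S.C a * b l
  map_zero' := sum_zero_index _
  map_add' q r := sum_add_index q r _ (by simp) (by simp [add_mul])

theorem combination_apply (b : ℕ → R) (q : K[X]) :
    S.combination b q = q.sum fun l a => S.C a * b l := rfl

theorem combination_monomial (b : ℕ → R) (l : ℕ) (a : K) :
    S.combination b (monomial l a) = S.C a * b l := by
  rw [combination_apply, sum_monomial_index _ _ (by simp)]

theorem hasLeadingTerm_of_combination {b : ℕ → R} {q : K[X]} {d : ℕ} {a : K}
    (hb : ∀ l, HasLeadingTerm (S.coeff (b l)) l 1)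
    (h : HasLeadingTerm (S.coeff (S.combination b q)) d a) : HasLeadingTerm q.coeff d a := by
  have hlead : HasLeadingTerm (S.coeff (S.combination b q)) q.natDegree q.leadingCoeff := by
    have hq : HasLeadingTerm q.coeff q.natDegree q.leadingCoeff :=
      HasLeadingTerm.iff_natDegree_le.2 ⟨le_rfl, rfl⟩
    have hsum := S.hasLeadingTerm_sum_C_mul (d' := 0) (fun l hl => notMem_support_iff.1 hl) hq
      (by simpa only [zero_add] using hb)
    rwa [add_zero, mul_one] at hsum
  obtain rfl | hq := eq_or_ne q 0
  · simp only [map_zero] at h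
    exact h
  have hle : q.natDegree ≤ d := by
    by_contra! hlt
    exact leadingCoeff_ne_zero.2 hq (hlead.1.symm.trans (h.2 _ hlt))
  refine HasLeadingTerm.iff_natDegree_le.2 ⟨hle, ?_⟩
  obtain rfl | hlt := hle.eq_or_lt
  · exact hlead.1.symm.trans h.1
  · rw [coeff_eq_zero_of_natDegree_lt hlt, ← h.1, hlead.2 d hlt]

/-- The element `∑ v_j(x) t^j` with coordinates `v_j ∈ K[x]` in the family `1, t, …, t^(n-1)`. The
coefficients of the `v_j` stand to the left of the powers of `x`. -/
noncomputable def ofCoords (x : R) : (Fin n → K[X]) →+ R where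
  toFun v := ∑ j, (v j).eval₂ S.C x * S.t ^ (j : ℕ)
  map_zero' := by simp
  map_add' v w := by simp [add_mul, Finset.sum_add_distrib]

theorem ofCoords_apply (x : R) (v : Fin n → K[X]) :
    S.ofCoords x v = ∑ j, (v j).eval₂ S.C x * S.t ^ (j : ℕ) := rfl

theorem ofCoords_eq_combination_interleave (x : R) (v : Fin n → K[X]) :
    S.ofCoords x v = S.combination (fun l => x ^ (l / n) * S.t ^ (l % n)) (interleave v) := by
  rw [ofCoords_apply, interleave, map_sum]
  refine Finset.sum_congr rfl fun j _ => ?_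
  induction v j using Polynomial.induction_on' with
  | add q r hq hr => rw [eval₂_add, add_mul, map_add, add_mul, map_add, hq, hr]
  | monomial k a =>
    rw [eval₂_monomial, expand_monomial, monomial_mul_X_pow, combination_monomial, mul_assoc,
      Nat.mul_add_mod', Nat.mod_eq_of_lt j.2, add_comm, Nat.add_mul_div_right _ _ j.pos,
      Nat.div_eq_of_lt j.2, zero_add]

theorem hasLeadingTerm_interleave_of_ofCoords {x : R} (hxn : HasLeadingTerm (S.coeff x) n 1)
    {v : Fin n → K[X]} {d : ℕ} {a : K} (h : HasLeadingTerm (S.coeff (S.ofCoords x v)) d a) :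
    HasLeadingTerm (interleave v).coeff d a := by
  rw [ofCoords_eq_combination_interleave] at h
  refine S.hasLeadingTerm_of_combination (fun l => ?_) h
  have hpow := S.hasLeadingTerm_mul (S.hasLeadingTerm_pow hxn (l / n))
    (S.hasLeadingTerm_t_pow_mul S.hasLeadingTerm_one (l % n))
  simpa only [mul_one, zero_add, Nat.div_add_mod] using hpow

theorem ofCoords_injective {x : R} (hxn : HasLeadingTerm (S.coeff x) n 1) :
    Function.Injective (S.ofCoords (n := n) x) := by
  refine (injective_iff_map_eq_zero _).2 fun v hv => eq_zero_of_interleave_eq_zero ?_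
  have hzero : HasLeadingTerm (S.coeff (S.ofCoords x v)) 0 0 := by simp [hv, HasLeadingTerm]
  have hlead := S.hasLeadingTerm_interleave_of_ofCoords hxn hzero
  ext l
  obtain rfl | hl := l.eq_zero_or_pos
  exacts [hlead.1, hlead.2 l hl]

end Coordinates

section Center

variable {n : ℕ} {x : R}

/-- Evaluation of polynomials at a central element, with coefficients on the left. -/
def evalCentral (hx : ∀ y, Commute y x) : K[X] →+* R := eval₂RingHom' S.C x fun _ => hx _

theorem evalCentral_apply (hx : ∀ y, Commute y x) (q : K[X]) :
    S.evalCentral hx q = q.eval₂ S.C x := rfl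

theorem t_mul_evalCentral (hx : ∀ y, Commute y x) (q : K[X]) :
    S.t * S.evalCentral hx q =
      S.evalCentral hx q * S.t + S.evalCentral hx (Differential.mapCoeffs q) := by
  induction q using Polynomial.induction_on' with
  | add q r hq hr =>
    simp only [map_add, mul_add, add_mul, hq, hr]
    abel
  | monomial k a =>
    simp only [Differential.mapCoeffs_monomial, evalCentral_apply, eval₂_monomial]
    rw [← mul_assoc, S.t_mul_C, add_mul, mul_assoc, ((hx S.t).pow_right k).eq, mul_assoc]

theorem commute_evalCentral_of_mapCoeffs_eq_zero (hx : ∀ y, Commute y x) {q : K[X]}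
    (hq : Differential.mapCoeffs q = 0) (y : R) : Commute y (S.evalCentral hx q) := by
  have hC (a : K) : Commute (S.C a) (S.evalCentral hx q) := by
    rw [← eval₂_C S.C x (a := a), ← evalCentral_apply (hx := hx)]
    exact (Commute.all (Polynomial.C a) q).map (S.evalCentral hx)
  have ht : Commute S.t (S.evalCentral hx q) := by
    rw [commute_iff_eq, t_mul_evalCentral, hq, map_zero, add_zero]
  exact S.commute_of_commute_C_of_commute_t hC ht y

theorem ofCoords_mapCoeffs (hx : ∀ y, Commute y x) (v : Fin n → K[X]) :
    S.ofCoords x (fun j => Differential.mapCoeffs (v j)) =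
      S.t * S.ofCoords x v - S.ofCoords x v * S.t := by
  simp only [ofCoords_apply, ← evalCentral_apply (hx := hx), Finset.mul_sum, Finset.sum_mul,
    ← Finset.sum_sub_distrib]
  refine Finset.sum_congr rfl fun j _ => ?_
  rw [← mul_assoc, t_mul_evalCentral, mul_assoc (S.evalCentral hx (v j)), ← pow_succ, pow_succ',
    ← mul_assoc]
  noncomm_ring

theorem ofCoords_single_zero [NeZero n] (q : K[X]) :
    S.ofCoords x (Pi.single (0 : Fin n) q) = q.eval₂ S.C x := by
  rw [ofCoords_apply, Finset.sum_eq_single 0]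
  · simp
  · intro j _ hj
    rw [Pi.single_eq_of_ne hj, eval₂_zero, zero_mul]
  · simp

/-- `ρ` is the left regular representation of `R` with respect to `1, t, …, t^(n-1)` over `K[x]`:
the `i`-th row of `ρ g` consists of the coordinates of `t^i g`. -/
def IsLeftRegularRepresentation (x : R) (ρ : R → Matrix (Fin n) (Fin n) K[X]) : Prop :=
  ∀ g (i : Fin n), S.t ^ (i : ℕ) * g = S.ofCoords x (ρ g i)

namespace IsLeftRegularRepresentation

variable {S} {ρ : R → Matrix (Fin n) (Fin n) K[X]}

theorem ofCoords_vecMul (hρ : S.IsLeftRegularRepresentation x ρ) (hx : ∀ y, Commute y x)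
    (v : Fin n → K[X]) (g : R) : S.ofCoords x (v ᵥ* ρ g) = S.ofCoords x v * g := by
  calc S.ofCoords x (v ᵥ* ρ g)
      = ∑ j, ∑ i, S.evalCentral hx (v i) * (S.evalCentral hx (ρ g i j) * S.t ^ (j : ℕ)) := by
        simp only [ofCoords_apply, ← evalCentral_apply (hx := hx), Matrix.vecMul, dotProduct,
          map_sum, map_mul, Finset.sum_mul, mul_assoc]
    _ = ∑ i, S.evalCentral hx (v i) * S.ofCoords x (ρ g i) := by
        rw [Finset.sum_comm]
        simp only [ofCoords_apply, ← evalCentral_apply (hx := hx), Finset.mul_sum]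
    _ = S.ofCoords x v * g := by
        simp only [← hρ g, ofCoords_apply, ← evalCentral_apply (hx := hx), Finset.sum_mul,
          mul_assoc]

theorem map_mapCoeffs (hρ : S.IsLeftRegularRepresentation x ρ) (hx : ∀ y, Commute y x)
    (hxn : HasLeadingTerm (S.coeff x) n 1) (f : R) :
    (ρ f).map Differential.mapCoeffs = ρ S.t * ρ f - ρ f * ρ S.t := by
  funext i
  refine S.ofCoords_injective hxn ?_
  calc S.ofCoords x (fun j => Differential.mapCoeffs (ρ f i j))
      = S.t ^ (i : ℕ) * S.t * f - S.t ^ (i : ℕ) * f * S.t := by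
        rw [S.ofCoords_mapCoeffs hx, ← hρ f i, ← mul_assoc, ← pow_succ', pow_succ]
    _ = S.ofCoords x (ρ S.t i ᵥ* ρ f) - S.ofCoords x (ρ f i ᵥ* ρ S.t) := by
        rw [hρ.ofCoords_vecMul hx, hρ.ofCoords_vecMul hx, hρ S.t i, hρ f i]
    _ = S.ofCoords x ((ρ S.t * ρ f - ρ f * ρ S.t) i) := by
        rw [← map_sub, ← Matrix.mul_apply_eq_vecMul, ← Matrix.mul_apply_eq_vecMul]
        rfl

theorem mapCoeffs_det (hρ : S.IsLeftRegularRepresentation x ρ) (hx : ∀ y, Commute y x)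
    (hxn : HasLeadingTerm (S.coeff x) n 1) (f : R) : Differential.mapCoeffs (ρ f).det = 0 :=
  derivation_det_eq_zero_of_map_eq_commutator _ _ _ (hρ.map_mapCoeffs hx hxn f)

theorem exists_mul_eq_eval₂_det [NeZero n] (hρ : S.IsLeftRegularRepresentation x ρ)
    (hx : ∀ y, Commute y x) (f : R) : ∃ f', f' * f = (ρ f).det.eval₂ S.C x := by
  refine ⟨S.ofCoords x ((ρ f).adjugate 0), ?_⟩
  have hrow : (ρ f).adjugate 0 ᵥ* ρ f = Pi.single 0 (ρ f).det := by
    funext j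
    rw [← Matrix.mul_apply_eq_vecMul, Matrix.adjugate_mul, Matrix.smul_apply, Matrix.one_apply,
      smul_eq_mul, mul_ite, mul_one, mul_zero, Pi.single_apply]
    simp only [eq_comm]
  rw [← hρ.ofCoords_vecMul hx, hrow, S.ofCoords_single_zero]

theorem hasLeadingTerm_det [NeZero n] (hρ : S.IsLeftRegularRepresentation x ρ)
    (hxn : HasLeadingTerm (S.coeff x) n 1) {f : R} {m : ℕ} {a : K}
    (hf : HasLeadingTerm (S.coeff f) m a) :
    HasLeadingTerm (ρ f).det.coeff m ((-1) ^ (m * (n - 1)) * a ^ n) :=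
  HasLeadingTerm.det_of_interleave fun i => S.hasLeadingTerm_interleave_of_ofCoords hxn <|
    hρ f i ▸ S.hasLeadingTerm_t_pow_mul hf i

end IsLeftRegularRepresentation

end Center

section CharP

variable (p : ℕ)

theorem t_pow_char_pow_mul_C [Fact p.Prime] [CharP K p] (k : ℕ) (a : K) :
    S.t ^ p ^ k * S.C a = S.C a * S.t ^ p ^ k + S.C ((fun b : K => b′)^[p ^ k] a) := by
  have : CharP R p := charP_of_injective_ringHom S.C_injective p
  have hsemi : Function.Semiconj S.C (fun b : K => b′) (fun z => S.t * z - z * S.t) := fun b => by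
    simp only [S.t_mul_C, add_sub_cancel_left]
  rw [(hsemi.iterate_right _).eq, iterate_commutator_char_pow p, add_sub_cancel]

/-- The value at `t` of the `p`-polynomial `T^(p^e) + c_1 T^(p^(e-1)) + ⋯ + c_e T`, whose
coefficients are indexed from `0` in `c`. -/
def pPolynomial (e : ℕ) (c : ℕ → K) : R :=
  S.t ^ p ^ e + ∑ i ∈ Finset.range e, S.C (c i) * S.t ^ p ^ (e - 1 - i)

theorem hasLeadingTerm_pPolynomial {p : ℕ} (hp : 1 < p) (e : ℕ) (c : ℕ → K) :
    HasLeadingTerm (S.coeff (S.pPolynomial p e c)) (p ^ e) 1 := by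
  have hlt {i : ℕ} (hi : i ∈ Finset.range e) : p ^ (e - 1 - i) < p ^ e :=
    Nat.pow_lt_pow_right hp (by have := Finset.mem_range.1 hi; omega)
  have hcoeff {l : ℕ} (hl : p ^ e ≤ l) :
      S.coeff (S.pPolynomial p e c) l = Finsupp.single (p ^ e) 1 l := by
    have hzero : ∀ i ∈ Finset.range e, S.coeff (S.C (c i) * S.t ^ p ^ (e - 1 - i)) l = 0 :=
      fun i hi => by rw [S.coeff_C_mul_t_pow, Finsupp.single_eq_of_ne ((hlt hi).trans_le hl).ne']
    rw [pPolynomial, map_add, map_sum, coeff_t_pow, Finsupp.add_apply, Finsupp.finsetSum_apply,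
      Finset.sum_eq_zero hzero, add_zero]
  constructor
  · rw [hcoeff le_rfl, Finsupp.single_eq_same]
  · intro l hl
    rw [hcoeff hl.le, Finsupp.single_eq_of_ne hl.ne']

theorem commute_pPolynomial [Fact p.Prime] [CharP K p] {e : ℕ} {c : ℕ → K}
    (hc : ∀ i, (c i)′ = 0)
    (hδ : ∀ a : K, (fun b : K => b′)^[p ^ e] a +
      ∑ i ∈ Finset.range e, c i * (fun b : K => b′)^[p ^ (e - 1 - i)] a = 0) (y : R) :
    Commute y (S.pPolynomial p e c) := by
  have ht : Commute S.t (S.pPolynomial p e c) := by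
    refine (Commute.self_pow _ _).add_right (Commute.sum_right _ _ _ fun i _ => ?_)
    refine Commute.mul_right ?_ (Commute.self_pow _ _)
    rw [commute_iff_eq, S.t_mul_C, hc, map_zero, add_zero]
  have hC (a : K) : Commute (S.C a) (S.pPolynomial p e c) := by
    have hsum (i : ℕ) : S.C (c i) * S.t ^ p ^ (e - 1 - i) * S.C a =
        S.C a * (S.C (c i) * S.t ^ p ^ (e - 1 - i)) +
          S.C (c i * (fun b : K => b′)^[p ^ (e - 1 - i)] a) := by
      rw [mul_assoc, S.t_pow_char_pow_mul_C p, mul_add, ← mul_assoc, ← mul_assoc, ← map_mul,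
        ← map_mul, ← map_mul, mul_comm a]
    rw [Commute.symm_iff, commute_iff_eq, pPolynomial, add_mul, S.t_pow_char_pow_mul_C p,
      Finset.sum_mul, Finset.sum_congr rfl fun i _ => hsum i, Finset.sum_add_distrib, mul_add,
      Finset.mul_sum, ← map_sum, add_add_add_comm, ← map_add, hδ, map_zero, add_zero]
  exact S.commute_of_commute_C_of_commute_t hC ht y

end CharP

end DifferentialPolynomialRing

theorem differential_polynomial_divides_norm_and_leading_term_general {K R : Type*} [CommRing K]
    [IsDomain K] [Differential K] [Ring R] (S : DifferentialPolynomialRing K R) {n : ℕ} [NeZero n]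
    {x : R} (hx : ∀ y, Commute y x) (hxn : HasLeadingTerm (S.coeff x) n 1)
    {ρ : R → Matrix (Fin n) (Fin n) K[X]} (hρ : S.IsLeftRegularRepresentation x ρ) {f : R} {m : ℕ}
    (hm : S.coeff f m ≠ 0) (hdeg : ∀ i, m < i → S.coeff f i = 0) :
    (∀ k, ((ρ f).det.coeff k)′ = 0) ∧
    (∃ f', (ρ f).det.eval₂ S.C x = f * f' ∧ (ρ f).det.eval₂ S.C x = f' * f) ∧
    (ρ f).det.natDegree = m ∧
    (ρ f).det.coeff m = (-1) ^ (m * (n - 1)) * S.coeff f m ^ n := by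
  have hconst := hρ.mapCoeffs_det hx hxn f
  have hlead := hρ.hasLeadingTerm_det hxn ⟨rfl, hdeg⟩
  have hlead_ne : (-1) ^ (m * (n - 1)) * S.coeff f m ^ n ≠ 0 :=
    mul_ne_zero (pow_ne_zero _ (neg_ne_zero.2 one_ne_zero)) (pow_ne_zero _ hm)
  refine ⟨fun k => ?_, ?_, hlead.natDegree_eq hlead_ne, hlead.1⟩
  · rw [← Differential.coeff_mapCoeffs, hconst, coeff_zero]
  · obtain ⟨f', hf'⟩ := hρ.exists_mul_eq_eval₂_det hx f
    have hcomm : Commute f ((ρ f).det.eval₂ S.C x) :=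
      S.commute_evalCentral_of_mapCoeffs_eq_zero hx hconst f
    have : NoZeroDivisors R := S.noZeroDivisors
    have hf : f ≠ 0 := by
      rintro rfl
      simp at hm
    refine ⟨f', mul_right_cancel₀ hf ?_, hf'.symm⟩
    rw [mul_assoc, hf', hcomm.eq]

/-- In `R = K[t;δ]` with `δ` algebraic with minimum `p`-polynomial `g` of degree
`p^e` and `Const(δ) = F`: every `f ∈ R` divides its reduced norm: `N(f) ∈ F[x]`
(`x = g(t)`) and there is `f^♯ ∈ R` with `N(f) = f·f^♯ = f^♯·f`. Moreover if `f`
has degree `m` then `N(f)` has `x`-degree `m` with leading coefficient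
`(−1)^{m(p^e−1)} a_m^{p^e}`. -/
theorem differential_polynomial_divides_norm_and_leading_term
    (p : ℕ) [Fact p.Prime] (F K : Type) [Field F] [Field K] [Algebra F K]
    [CharP F p]
    (hinsep : ∀ x : K, x ^ p ∈ (algebraMap F K).range)
    (e : ℕ) (hdim : Module.finrank F K = p ^ e)
    (δ : K → K)
    (hadd : ∀ a b : K, δ (a + b) = δ a + δ b)
    (hleibniz : ∀ a b : K, δ (a * b) = a * δ b + δ a * b)
    (hconst : ∀ x : K, δ x = 0 ↔ x ∈ (algebraMap F K).range)
    (c : ℕ → F)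
    (hg : ∀ x : K, δ^[p ^ e] x
      + ∑ i ∈ Finset.range e, algebraMap F K (c i) * δ^[p ^ (e - 1 - i)] x = 0)
    (R : Type) [Ring R] (ι : K →+* R) (t : R)
    (hmul : ∀ a : K, t * ι a = ι a * t + ι (δ a))
    (coeff : R →+ (ℕ →₀ K))
    (hcoeff : ∀ (a : K) (i : ℕ), coeff (ι a * t ^ i) = Finsupp.single i a)
    (hrepr : ∀ x : R, (coeff x).sum (fun i a => ι a * t ^ i) = x)
    (xR : R) (hxR : xR = t ^ (p ^ e)
      + ∑ i ∈ Finset.range e, ι (algebraMap F K (c i)) * t ^ (p ^ (e - 1 - i)))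
    -- the left regular representation wrt the K(x)-basis 1, t, …, t^{p^e−1}
    -- and the reduced norm N = det ∘ ρ:
    (ρ : R → Matrix (Fin (p ^ e)) (Fin (p ^ e)) (Polynomial K))
    (hρ : ∀ (g : R) (i : Fin (p ^ e)), t ^ (i : ℕ) * g =
      ∑ j : Fin (p ^ e), ((ρ g i j).sum fun k a => ι a * xR ^ k) * t ^ (j : ℕ))
    (N : R → Polynomial K) (hN : ∀ g : R, N g = (ρ g).det)
    (f : R) (m : ℕ) (hdeg : coeff f m ≠ 0 ∧ ∀ i : ℕ, m < i → coeff f i = 0) :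
    (∀ k : ℕ, (N f).coeff k ∈ (algebraMap F K).range) ∧
    (∃ fsharp : R,
      ((N f).sum fun k a => ι a * xR ^ k) = f * fsharp ∧
      ((N f).sum fun k a => ι a * xR ^ k) = fsharp * f) ∧
    (N f).natDegree = m ∧
    (N f).coeff m = (-1) ^ (m * (p ^ e - 1)) * (coeff f m) ^ (p ^ e) := by
  have hK : CharP K p := charP_of_injective_algebraMap (algebraMap F K).injective p
  let : Differential K := ⟨Derivation.mk' (AddMonoidHom.mk' δ hadd).toIntLinearMap fun a b => by
    simpa [mul_comm] using hleibniz a b⟩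
  let S : DifferentialPolynomialRing K R := ⟨ι, t, coeff, hmul, hcoeff, hrepr⟩
  have hx : xR = S.pPolynomial p e fun i => algebraMap F K (c i) := hxR
  have hcentral (y : R) : Commute y xR :=
    hx ▸ S.commute_pPolynomial p (fun i => (hconst _).2 ⟨c i, rfl⟩) hg y
  have hmonic : HasLeadingTerm (S.coeff xR) (p ^ e) 1 :=
    hx ▸ S.hasLeadingTerm_pPolynomial (Fact.out : p.Prime).one_lt e _
  have hleft : S.IsLeftRegularRepresentation xR ρ := fun g i => by
    simpa only [S.ofCoords_apply, eval₂_eq_sum] using hρ g i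
  obtain ⟨hcoeffs, hdvd, hlead⟩ := differential_polynomial_divides_norm_and_leading_term_general S
    hcentral hmonic hleft hdeg.1 hdeg.2
  simp only [eval₂_eq_sum] at hdvd
  rw [hN]
  exact ⟨fun k => (hconst _).1 (hcoeffs k), hdvd, hlead⟩
end
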